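/- arXiv:1908.00885 — 3 statements merged into one kernel-verified Lean document; each statement's English description precedes it below -/
import Mathlib

section
/- Let d ≥ 2 and let M ≥ 1 be an integer. Let f : [−1,1] → ℝ be continuous on [−1,1] and (M+1)-times differentiable on (−1,1), with f^{(k)}(t) ≥ 0 for all t ∈ (−1,1) and 0 ≤ k ≤ M, and f^{(M+1)}(t) < 0 for all t ∈ (−1,1). Suppose there exists a tight spherical M-design C ⊂ S^{d-1} whose uniform measure minimizes the energy I_f over Borel probability measures on S^{d-1}. Then every Borel probability measure μ on S^{d-1} that minimizes I_f has finite support, and its support is a tight spherical M-design. -/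
/-!
The proof is a linear programming bound in which every inequality is examined for equality.

Let `h` be the polynomial of degree at most `M` that interpolates `f` at `1`, to second order at
the inner products of `C₀` in `(-1, 1)`, and to first order at `-1` if `-1` occurs; the tightness
of `C₀` makes the number of conditions exactly `M + 1`. Since `f^{(M+1)} < 0` and the nodal
polynomial is negative off the nodes, `h ≤ f` on `[-1, 1]`, strictly off the nodes
(`Herm.lt_of_nodal_neg`, `nodal_neg`). By Newton's formula, `h` is a constant plus a combination
of partial nodal polynomials whose coefficients are divided differences of `f`, hence positive
(`hermite_chain`, `Herm.coeff_pos`).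

The partial nodal polynomials are positive definite kernels (`exists_chain_data`). They are
products of `∏_{i<j} (t - r_i)`, where `r_0 < r_1 < …` are the inner products, with the factor
`t + 1` occurring once when `-1` is among them. The orthogonal polynomials of the distance
distribution of `C₀` are positive definite, because the design property makes them reproduce
themselves under convolution over `C₀` (`PD_of_isOP`). The products `∏_{i<j} (t - r_i)` are
nonnegative combinations of these: the largest node is removed by passing to the weight `(b - t) w`,
which keeps the cone spanned by the orthogonal polynomials (`prod_mem_cone`). When `-1` occurs, the
two extreme nodes `±1` are first removed together by passing to `(1 - t²) w`, using parity
(`IsOP.transfer_symm`).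

For a positive definite polynomial `g` of degree at most `M`, the energy of `μ` exceeds that of the
uniform measure on `C₀` by a sum of squares (`dev_eq_sum_sq`). Thus
`I_f(μ) ≥ I_h(μ) ≥ I_h(C₀) = I_f(C₀)`. For a minimizer equality holds throughout: the energies of
all monomials of degree at most `M` agree, which forces the moments of `μ` up to degree `M` to be
those of `C₀` (`integral_evalPt`), and the inner products of distinct points of the support lie
among those of `C₀` (`minimizer_moments`). Testing against the annihilator of these inner products
shows that each point of the support has mass `1/|C₀|` (`measure_singleton`), so the support is
finite and is an `M`-design. No inner product of `C₀` can be missing from it, since a polynomial of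
degree at most `M`, nonnegative on `[-1, 1]`, would then have zero average over the support but not
over `C₀` (`innerProds_subset`).
-/

open MeasureTheory Metric
open scoped RealInnerProductSpace

noncomputable section

/-- The unit sphere `S^{d-1}` in `ℝ^d` with the standard inner product. -/
abbrev Sph (d : ℕ) := Metric.sphere (0 : EuclideanSpace ℝ (Fin d)) 1

/-- The uniform (rotation-invariant) Borel probability measure `σ` on the sphere
`S^{d-1}`, obtained by normalizing the canonical measure on the unit sphere induced
by the Lebesgue measure. -/
def sphσ (d : ℕ) : Measure (Sph d) :=
  (((volume : Measure (EuclideanSpace ℝ (Fin d))).toSphere) Set.univ)⁻¹ •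
    ((volume : Measure (EuclideanSpace ℝ (Fin d))).toSphere)

variable {d : ℕ}

/-- The energy integral `I_f(μ) = ∫∫ f (⟨x,y⟩) dμ(x) dμ(y)` of a Borel measure `μ`
on the sphere `S^{d-1}`. -/
def energy (f : ℝ → ℝ) (μ : Measure (Sph d)) : ℝ :=
  ∫ x, ∫ y, f ⟪(x : EuclideanSpace ℝ (Fin d)), (y : EuclideanSpace ℝ (Fin d))⟫ ∂μ ∂μ

/-- The uniform probability measure `(1/|C|) ∑_{x ∈ C} δ_x` on a finite set
`C ⊆ S^{d-1}`. -/
def unifOn (C : Finset (Sph d)) : Measure (Sph d) :=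
  (C.card : ENNReal)⁻¹ • ∑ x ∈ C, Measure.dirac x

/-- Evaluation of a polynomial in `d` variables at a point of the sphere. -/
def evalPt (P : MvPolynomial (Fin d) ℝ) (x : Sph d) : ℝ :=
  MvPolynomial.eval (fun i => (x : EuclideanSpace ℝ (Fin d)) i) P

/-- `C` is a spherical `t`-design: averaging any polynomial of total degree at most
`t` over `C` gives its mean over the sphere with respect to the uniform measure. -/
def IsSphDesign (d t : ℕ) (C : Finset (Sph d)) : Prop :=
  C.Nonempty ∧ ∀ P : MvPolynomial (Fin d) ℝ, P.totalDegree ≤ t →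
    (∑ x ∈ C, evalPt P x) / (C.card : ℝ) = ∫ x, evalPt P x ∂(sphσ d)

/-- The set `A(C) = {⟨x,y⟩ : x, y ∈ C, x ≠ y}` of inner products between distinct
points of `C`. -/
def innerProds (C : Finset (Sph d)) : Set ℝ :=
  {t | ∃ x ∈ C, ∃ y ∈ C, x ≠ y ∧
    ⟪(x : EuclideanSpace ℝ (Fin d)), (y : EuclideanSpace ℝ (Fin d))⟫ = t}

/-- `C` is a tight spherical `M`-design: it is a spherical `M`-design, and either
`M = 2m` and `A(C)` has exactly `m` elements, or `M = 2m - 1` and `A(C)` has exactly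
`m` elements, one of which is `-1`. -/
def IsTightSphDesign (d M : ℕ) (C : Finset (Sph d)) : Prop :=
  IsSphDesign d M C ∧
    ((∃ m, M = 2 * m ∧ (innerProds C).ncard = m) ∨
     (∃ m, M + 1 = 2 * m ∧ (innerProds C).ncard = m ∧ (-1 : ℝ) ∈ innerProds C))

/-- A function `h : [-1,1] → ℝ` is positive definite on `S^{d-1}` if all matrices
`(h(⟨x_i, x_j⟩))_{i,j}` arising from points of the sphere are positive semidefinite. -/
def IsPosDefOn (d : ℕ) (h : ℝ → ℝ) : Prop :=
  ∀ (N : ℕ) (x : Fin N → Sph d) (c : Fin N → ℂ),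
    0 ≤ (∑ i, ∑ j,
      (h ⟪(x i : EuclideanSpace ℝ (Fin d)), (x j : EuclideanSpace ℝ (Fin d))⟫ : ℂ)
        * c i * (starRingEnd ℂ) (c j)).re

/-- The support of a Borel measure on the sphere: the set of points all of whose open
neighborhoods have positive measure. -/
def msupport (μ : Measure (Sph d)) : Set (Sph d) :=
  {x | ∀ U : Set (Sph d), IsOpen U → x ∈ U → 0 < μ U}

/-! ### Orthogonal polynomials of a discrete measure -/

noncomputable section
open Polynomial

/-- Integration of a polynomial against `∑_{i<n} w i δ_{r i}`. -/
def dI (n : ℕ) (w r : ℕ → ℝ) : ℝ[X] →ₗ[ℝ] ℝ :=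
  ∑ i ∈ Finset.range n, w i • Polynomial.leval (r i)

lemma dI_apply (n : ℕ) (w r : ℕ → ℝ) (g : ℝ[X]) :
    dI n w r g = ∑ i ∈ Finset.range n, w i * g.eval (r i) := by
  simp [dI, LinearMap.sum_apply]

/-- The weights are positive and the nodes increase. -/
structure IsNodes (n : ℕ) (w r : ℕ → ℝ) : Prop where
  pos : ∀ i < n, 0 < w i
  lt : ∀ i j, i < j → j < n → r i < r j

/-- `p` is the monic orthogonal polynomial of degree `k`. -/
structure IsOP (n : ℕ) (w r : ℕ → ℝ) (k : ℕ) (p : ℝ[X]) : Prop where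
  monic : p.Monic
  deg : p.natDegree = k
  orth : ∀ q : ℝ[X], q.degree < k → dI n w r (p * q) = 0

/-- A set of polynomials closed under nonnegative linear combinations. -/
structure IsCone (D : Set ℝ[X]) : Prop where
  zero : (0 : ℝ[X]) ∈ D
  add : ∀ {g h}, g ∈ D → h ∈ D → g + h ∈ D
  smul : ∀ {a : ℝ} {g}, 0 ≤ a → g ∈ D → a • g ∈ D

variable {n : ℕ} {w r : ℕ → ℝ}

lemma IsNodes.injOn (h : IsNodes n w r) : Set.InjOn r (Finset.range n) := by
  intro i hi j hj hij
  simp only [Finset.coe_range, Set.mem_Iio] at hi hj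
  rcases lt_trichotomy i j with hl | hl | hl
  · exact absurd hij (h.lt i j hl hj).ne
  · exact hl
  · exact absurd hij (h.lt j i hl hi).ne'

lemma IsNodes.sq_nonneg (h : IsNodes n w r) (q : ℝ[X]) : 0 ≤ dI n w r (q * q) := by
  rw [dI_apply]
  refine Finset.sum_nonneg fun i hi => mul_nonneg (h.pos i (by simpa using hi)).le ?_
  rw [eval_mul]; exact mul_self_nonneg _

lemma IsNodes.eq_zero (h : IsNodes n w r) {q : ℝ[X]} (hq : q.degree < n)
    (h0 : dI n w r (q * q) = 0) : q = 0 := by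
  refine eq_zero_of_degree_lt_of_eval_index_eq_zero (s := Finset.range n) (v := r) h.injOn
    (by simpa using hq) ?_
  intro i hi
  rw [dI_apply, Finset.sum_eq_zero_iff_of_nonneg] at h0
  · have := h0 i hi
    have hw := h.pos i (by simpa using hi)
    simpa [hw.ne'] using this
  · intro i hi
    refine mul_nonneg (h.pos i (by simpa using hi)).le ?_
    rw [eval_mul]; exact mul_self_nonneg _

lemma IsOP.degree_eq {k : ℕ} {p : ℝ[X]} (hp : IsOP n w r k p) : p.degree = k := by
  rw [degree_eq_natDegree hp.monic.ne_zero, hp.deg]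

lemma degree_sub_smul_lt {k : ℕ} {p e : ℝ[X]} (hpm : p.Monic) (hpd : p.natDegree = k)
    (he : e.degree < (k + 1 : ℕ)) : (e - e.coeff k • p).degree < k := by
  rw [degree_lt_iff_coeff_zero] at he ⊢
  intro j hj
  rcases hj.eq_or_lt with rfl | hj
  · have : p.coeff k = 1 := by rw [← hpd]; exact hpm.coeff_natDegree
    simp [this]
  · have : p.coeff j = 0 := coeff_eq_zero_of_natDegree_lt (by omega)
    simp [this, he j hj]

lemma IsOP.pos (h : IsNodes n w r) {k : ℕ} {p : ℝ[X]} (hp : IsOP n w r k p) (hk : k < n) :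
    0 < dI n w r (p * p) := by
  refine lt_of_le_of_ne (h.sq_nonneg p) fun h0 => ?_
  exact hp.monic.ne_zero (h.eq_zero (by rw [hp.degree_eq]; exact_mod_cast hk) h0.symm)

lemma isOP_of_proj {k : ℕ} {q : ℝ[X]} (hq : q.degree < k)
    (ho : ∀ e : ℝ[X], e.degree < k → dI n w r ((X ^ k - q) * e) = 0) :
    IsOP n w r k (X ^ k - q) := by
  refine ⟨monic_X_pow_sub (by
    rcases k with _ | k
    · simp at hq; simp [hq]
    · exact hq), ?_, ho⟩
  have hd : (X ^ k - q : ℝ[X]).degree = (k : WithBot ℕ) := by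
    rw [degree_sub_eq_left_of_degree_lt (by simpa using hq), degree_X_pow]
  exact natDegree_eq_of_degree_eq_some hd

/-- Orthogonal projection onto the polynomials of degree less than `k`. -/
lemma exists_proj (h : IsNodes n w r) (k : ℕ) (hk : k ≤ n) (g : ℝ[X]) :
    ∃ q : ℝ[X], q.degree < k ∧ ∀ e : ℝ[X], e.degree < k → dI n w r ((g - q) * e) = 0 := by
  induction k generalizing g with
  | zero =>
    refine ⟨0, by simp, fun e he => ?_⟩
    have : e = 0 := by simpa using he
    simp [this]
  | succ k ih =>
    obtain ⟨q₀, hq₀, ho₀⟩ := ih (by omega) (X ^ k)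
    have hp := isOP_of_proj hq₀ ho₀
    set p := X ^ k - q₀
    obtain ⟨q, hq, ho⟩ := ih (by omega) g
    have hpp := hp.pos h (by omega)
    refine ⟨q + (dI n w r ((g - q) * p) / dI n w r (p * p)) • p, ?_, ?_⟩
    · refine (degree_add_le _ _).trans_lt (max_lt (hq.trans (by exact_mod_cast k.lt_succ_self)) ?_)
      refine (degree_smul_le _ _).trans_lt ?_
      rw [hp.degree_eq]; exact_mod_cast k.lt_succ_self
    · intro e he
      have hlow := degree_sub_smul_lt hp.monic hp.deg he
      have h1 := ho _ hlow
      have h2 := hp.orth _ hlow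
      set a := e.coeff k
      set c := dI n w r ((g - q) * p) / dI n w r (p * p) with hc
      have hc' : c * dI n w r (p * p) = dI n w r ((g - q) * p) := div_mul_cancel₀ _ hpp.ne'
      have e1 : (g - (q + c • p)) * e = (g - q) * (e - a • p) - c • (p * (e - a • p))
          + a • ((g - q) * p) - (a * c) • (p * p) := by
        simp only [smul_eq_C_mul, C_mul]; ring
      rw [e1]
      simp only [map_sub, map_add, map_smul, h1, h2, smul_eq_mul]
      rw [mul_assoc, hc']; ring

lemma exists_isOP (h : IsNodes n w r) {k : ℕ} (hk : k ≤ n) : ∃ p, IsOP n w r k p := by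
  obtain ⟨q₀, hq₀, ho₀⟩ := exists_proj h k hk (X ^ k)
  exact ⟨_, isOP_of_proj hq₀ ho₀⟩

lemma IsOP.sub_degree_lt {k : ℕ} {p q : ℝ[X]} (hp : p.Monic) (hp' : p.natDegree = k)
    (hq : q.Monic) (hq' : q.natDegree = k) : (p - q).degree < k := by
  have := degree_sub_smul_lt (e := p) hq hq' (by
    rw [degree_eq_natDegree hp.ne_zero, hp']; exact_mod_cast k.lt_succ_self)
  have h1 : p.coeff k = 1 := by rw [← hp']; exact hp.coeff_natDegree
  simpa [h1] using this

lemma IsOP.unique (h : IsNodes n w r) {k : ℕ} (hk : k ≤ n) {p q : ℝ[X]}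
    (hp : IsOP n w r k p) (hq : IsOP n w r k q) : p = q := by
  have hd := IsOP.sub_degree_lt hp.monic hp.deg hq.monic hq.deg
  refine sub_eq_zero.1 (h.eq_zero (hd.trans_le (by exact_mod_cast hk)) ?_)
  rw [sub_mul, map_sub, hp.orth _ hd, hq.orth _ hd, sub_zero]

/-- An orthogonal polynomial is positive at the largest node: otherwise it has a root `c` at or
beyond that node, and pairing it with its quotient by `X - c` contradicts orthogonality. -/
lemma IsOP.eval_top_pos (h : IsNodes (n + 1) w r) {k : ℕ} (hk : k < n + 1) {p : ℝ[X]}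
    (hp : IsOP (n + 1) w r k p) : 0 < p.eval (r n) := by
  by_contra hneg
  push Not at hneg
  have hk0 : 0 < k := by
    rcases Nat.eq_zero_or_pos k with rfl | hk0
    · have : p = 1 := hp.monic.natDegree_eq_zero.1 hp.deg
      simp [this] at hneg
      linarith
    · exact hk0
  obtain ⟨c, hc, hpc⟩ : ∃ c, r n ≤ c ∧ p.eval c = 0 := by
    have ht : Filter.Tendsto (fun x => p.eval x) Filter.atTop Filter.atTop :=
      p.tendsto_atTop_of_leadingCoeff_nonneg (by
        rw [hp.degree_eq]; exact_mod_cast hk0) (by rw [hp.monic.leadingCoeff]; norm_num)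
    obtain ⟨b, hb, hb'⟩ := ((ht.eventually_ge_atTop 0).and
      (Filter.eventually_ge_atTop (r n))).exists
    obtain ⟨c, hc, hc'⟩ := intermediate_value_Icc hb' p.continuous.continuousOn
      (Set.mem_Icc.2 ⟨hneg, hb⟩)
    exact ⟨c, hc.1, hc'⟩
  obtain ⟨q, hq⟩ := dvd_iff_isRoot.2 hpc
  have hq0 : q ≠ 0 := by rintro rfl; exact hp.monic.ne_zero (by simp [hq])
  have hqd : q.natDegree + 1 = k := by
    rw [← hp.deg, hq, natDegree_mul (X_sub_C_ne_zero c) hq0, natDegree_X_sub_C, add_comm]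
  have hqdeg : q.degree < k := by
    rw [degree_eq_natDegree hq0]; exact_mod_cast (by omega : q.natDegree < k)
  have h0 := hp.orth q hqdeg
  rw [dI_apply] at h0
  have hle : ∀ i ∈ Finset.range (n + 1), w i * (p * q).eval (r i) ≤ 0 := by
    intro i hi
    have hi : i < n + 1 := by simpa using hi
    have hri : r i ≤ r n := by
      rcases (Nat.lt_succ_iff.1 hi).eq_or_lt with rfl | hl
      · exact le_rfl
      · exact (h.lt i n hl (by omega)).le
    refine mul_nonpos_of_nonneg_of_nonpos (h.pos i hi).le ?_
    rw [hq]
    simp only [eval_mul, eval_sub, eval_X, eval_C]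
    nlinarith [mul_self_nonneg (q.eval (r i))]
  rw [Finset.sum_eq_zero_iff_of_nonpos hle] at h0
  refine hq0 (eq_zero_of_degree_lt_of_eval_index_eq_zero (s := Finset.range n) (v := r)
    (h.injOn.mono (by intro i hi; simp only [Finset.coe_range, Set.mem_Iio] at hi ⊢; omega)) ?_ ?_)
  · rw [degree_eq_natDegree hq0, Finset.card_range]
    exact_mod_cast (by omega : q.natDegree < n)
  · intro i hi
    have hi : i < n := by simpa using hi
    have h1 := h0 i (by simp; omega)
    have h2 := (h.pos i (by omega)).ne'
    have h3 : r i - c ≠ 0 := by linarith [h.lt i n hi (by omega)]|> fun h : r i - c < 0 => h.ne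
    rw [hq] at h1
    simpa [h2, h3] using h1

/-- A polynomial whose Fourier coefficients are nonnegative lies in any cone containing the
orthogonal polynomials. -/
lemma mem_cone_of_coeff_nonneg (h : IsNodes n w r) {D : Set ℝ[X]} (hD : IsCone D) {k : ℕ}
    (hk : k ≤ n) (hOP : ∀ j < k, ∀ p, IsOP n w r j p → p ∈ D) {g : ℝ[X]} (hg : g.degree < k)
    (hpos : ∀ j < k, ∀ p, IsOP n w r j p → 0 ≤ dI n w r (g * p)) : g ∈ D := by
  induction k generalizing g with
  | zero =>
    have : g = 0 := by simpa using hg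
    rw [this]; exact hD.zero
  | succ k ih =>
    obtain ⟨p, hp⟩ := exists_isOP h (show k ≤ n by omega)
    have hlow := degree_sub_smul_lt hp.monic hp.deg hg
    set a := g.coeff k
    have hg' : g = a • p + (g - a • p) := by ring
    have hpp := hp.pos h (by omega)
    have ha : 0 ≤ a := by
      have h1 := hpos k (by omega) p hp
      have h2 := hp.orth _ hlow
      have : dI n w r (g * p) = a * dI n w r (p * p) := by
        have e : g * p = a • (p * p) + p * (g - a • p) := by
          simp only [smul_eq_C_mul]; ring
        rw [e, map_add, h2, map_smul, smul_eq_mul, add_zero]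
      rw [this] at h1
      exact nonneg_of_mul_nonneg_left h1 hpp
    rw [hg']
    refine hD.add (hD.smul ha (hOP k (by omega) p hp)) (ih (by omega)
      (fun j hj => hOP j (by omega)) hlow ?_)
    intro j hj q hq
    have h3 : dI n w r (p * q) = 0 := hp.orth q (by rw [hq.degree_eq]; exact_mod_cast hj)
    have e : (g - a • p) * q = g * q - a • (p * q) := by simp only [smul_eq_C_mul]; ring
    rw [e, map_sub, map_smul, h3, smul_zero, sub_zero]
    exact hpos j (by omega) q hq

/-- The pairing of two monic polynomials of degree `k`, one of which is orthogonal. -/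
lemma IsOP.pair_self {k : ℕ} {p g : ℝ[X]} (hp : IsOP n w r k p) (hg : g.Monic)
    (hg' : g.natDegree = k) : dI n w r (g * p) = dI n w r (p * p) := by
  have hd := IsOP.sub_degree_lt hg hg' hp.monic hp.deg
  have e : g * p = p * (g - p) + p * p := by ring
  rw [e, map_add, hp.orth _ hd, zero_add]

/-- Removing the largest node `b` by passing to the weight `(b - t) w`: the new orthogonal
polynomials are nonnegative combinations of the old ones. -/
lemma IsOP.transfer_top (h : IsNodes (n + 1) w r) {D : Set ℝ[X]} (hD : IsCone D)
    (hOP : ∀ j < n + 1, ∀ p, IsOP (n + 1) w r j p → p ∈ D) {k : ℕ} (hk : k < n) {p' : ℝ[X]}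
    (hp' : IsOP n (fun i => w i * (r n - r i)) r k p') : p' ∈ D := by
  have key : ∀ g : ℝ[X], dI n (fun i => w i * (r n - r i)) r g
      = dI (n + 1) w r ((C (r n) - X) * g) := by
    intro g
    rw [dI_apply, dI_apply, Finset.sum_range_succ]
    simp [mul_assoc]
  have formula : ∀ j ≤ k, ∀ p, IsOP (n + 1) w r j p →
      dI (n + 1) w r (p' * p) = p.eval (r n) * dI (n + 1) w r p' := by
    intro j hj p hp
    obtain ⟨s, hs⟩ := X_sub_C_dvd_sub_C_eval (a := r n) (p := p)
    have hsd : s.degree < k := by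
      by_cases hs0 : s = 0
      · simp [hs0]
      have h1 : (p - C (p.eval (r n))).natDegree ≤ j := by
        rw [natDegree_sub_C, hp.deg]
      rw [hs, natDegree_mul (X_sub_C_ne_zero _) hs0, natDegree_X_sub_C] at h1
      rw [degree_eq_natDegree hs0]; exact_mod_cast (by omega : s.natDegree < k)
    have h2 := hp'.orth s hsd
    rw [key] at h2
    have e : p' * p = p.eval (r n) • p' - (C (r n) - X) * (p' * s) := by
      rw [smul_eq_C_mul]
      linear_combination p' * hs
    rw [e, map_sub, h2, map_smul, smul_eq_mul, sub_zero]
  obtain ⟨p, hp⟩ := exists_isOP h (show k ≤ n + 1 by omega)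
  have hpos : 0 < dI (n + 1) w r p' := by
    have h1 := formula k le_rfl p hp
    rw [hp.pair_self hp'.monic hp'.deg] at h1
    have h2 := hp.pos h (by omega)
    rw [h1] at h2
    exact (pos_iff_pos_of_mul_pos h2).1 (hp.eval_top_pos h (by omega))
  refine mem_cone_of_coeff_nonneg h hD (k := k + 1) (by omega) (fun j hj => hOP j (by omega))
    (by rw [hp'.degree_eq]; exact_mod_cast k.lt_succ_self) ?_
  intro j hj q hq
  rw [formula j (by omega) q hq]
  exact mul_nonneg (hq.eval_top_pos h (by omega)).le hpos.le

/-- The products over the smallest nodes lie in every cone containing the orthogonal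
polynomials. -/
lemma prod_mem_cone {D : Set ℝ[X]} (hD : IsCone D) (h : IsNodes n w r)
    (hOP : ∀ j < n, ∀ p, IsOP n w r j p → p ∈ D) (k : ℕ) (hk : k < n) :
    ∏ i ∈ Finset.range k, (X - C (r i)) ∈ D := by
  induction n generalizing w k with
  | zero => omega
  | succ n ih =>
    rcases (Nat.lt_succ_iff.1 hk).eq_or_lt with rfl | hlt
    · have hdeg : (∏ i ∈ Finset.range k, (X - C (r i))).degree < ((k + 1 : ℕ) : WithBot ℕ) := by
        rw [degree_prod]
        simp only [degree_X_sub_C, Finset.sum_const, Finset.card_range, nsmul_eq_mul, mul_one]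
        exact_mod_cast k.lt_succ_self
      refine mem_cone_of_coeff_nonneg h hD (k := k + 1) le_rfl hOP hdeg ?_
      intro j hj p hp
      rw [dI_apply, Finset.sum_range_succ, Finset.sum_eq_zero, zero_add]
      · rw [eval_mul, eval_prod]
        refine mul_nonneg (h.pos k (by omega)).le (mul_nonneg (Finset.prod_nonneg ?_)
          (hp.eval_top_pos h hj).le)
        intro i hi
        simp only [eval_sub, eval_X, eval_C]
        linarith [h.lt i k (by simpa using hi) (by omega)]
      · intro i hi
        rw [eval_mul, eval_prod, Finset.prod_eq_zero hi (by simp)]; simp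
    · refine ih (w := fun i => w i * (r n - r i)) ⟨?_, ?_⟩ ?_ k hlt
      · intro i hi
        exact mul_pos (h.pos i (by omega)) (by linarith [h.lt i n hi (by omega)])
      · intro i j hij hj; exact h.lt i j hij (by omega)
      · intro j hj p hp
        exact hp.transfer_top h hD hOP hj
end

/-! ### Symmetric discrete measures -/

noncomputable section
open Polynomial
variable {n : ℕ} {w r : ℕ → ℝ}

lemma degree_comp_neg_X (e : ℝ[X]) : (e.comp (-X)).natDegree = e.natDegree := by
  rw [natDegree_comp, natDegree_neg, natDegree_X, mul_one]

lemma comp_neg_X_comp (e : ℝ[X]) : (e.comp (-X)).comp (-X) = e := by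
  rw [comp_assoc]; simp

/-- Orthogonal polynomials of a symmetric functional have a parity. -/
lemma IsOP.parity (h : IsNodes n w r) {k : ℕ} (hk : k ≤ n) {p : ℝ[X]} (hp : IsOP n w r k p)
    (hsym : ∀ g : ℝ[X], g.natDegree + 1 ≤ 2 * k → dI n w r (g.comp (-X)) = dI n w r g) :
    p.comp (-X) = (-1 : ℝ) ^ k • p := by
  have hq : IsOP n w r k ((-1 : ℝ) ^ k • p.comp (-X)) := by
    have hu : ((-1 : ℝ) ^ k) ≠ 0 := by positivity
    refine ⟨?_, ?_, ?_⟩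
    · rw [Monic, smul_eq_C_mul, leadingCoeff_mul, leadingCoeff_C, leadingCoeff_comp (by simp),
        hp.monic.leadingCoeff, hp.deg, leadingCoeff_neg, leadingCoeff_X, one_mul, ← mul_pow]
      simp
    · rw [natDegree_smul _ hu, degree_comp_neg_X, hp.deg]
    · intro e he
      by_cases he0 : e = 0
      · simp [he0]
      have hed : e.natDegree < k := by
        rw [degree_eq_natDegree he0] at he; exact_mod_cast he
      have e1 : ((-1 : ℝ) ^ k • p.comp (-X)) * e
          = (-1 : ℝ) ^ k • ((p * e.comp (-X)).comp (-X)) := by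
        rw [mul_comp, comp_neg_X_comp, smul_mul_assoc]
      rw [e1, map_smul, hsym, hp.orth, smul_zero]
      · refine (degree_le_natDegree).trans_lt ?_
        rw [degree_comp_neg_X]; exact_mod_cast hed
      · refine (Nat.add_le_add_right natDegree_mul_le 1).trans ?_
        rw [degree_comp_neg_X, hp.deg]; omega
  have := IsOP.unique h hk hp hq
  conv_rhs => rw [this]
  rw [smul_smul, ← mul_pow]; simp

/-- For a symmetric functional with extreme nodes `±1`, removing both by passing to the weight
`(1 - t²) w` again produces nonnegative combinations of the old orthogonal polynomials. -/
lemma IsOP.transfer_symm {l : ℕ} (h : IsNodes (l + 2) w r) {D : Set ℝ[X]} (hD : IsCone D)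
    (h0 : r 0 = -1) (h1 : r (l + 1) = 1)
    (hsym : ∀ g : ℝ[X], g.natDegree ≤ 2 * l + 1 →
      dI (l + 2) w r (g.comp (-X)) = dI (l + 2) w r g)
    (hOP : ∀ j ≤ l, ∀ p, IsOP (l + 2) w r j p → p ∈ D) {k : ℕ} (hk : k ≤ l) {p' : ℝ[X]}
    (hp' : IsOP l (fun i => w (i + 1) * (1 - r (i + 1) ^ 2)) (fun i => r (i + 1)) k p')
    (h' : IsNodes l (fun i => w (i + 1) * (1 - r (i + 1) ^ 2)) (fun i => r (i + 1))) :
    p' ∈ D := by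
  have key : ∀ g : ℝ[X], dI l (fun i => w (i + 1) * (1 - r (i + 1) ^ 2)) (fun i => r (i + 1)) g
      = dI (l + 2) w r ((1 - X ^ 2) * g) := by
    intro g
    rw [dI_apply, dI_apply, Finset.sum_range_succ, Finset.sum_range_succ']
    simp [mul_assoc, h0, h1]
  have hpar' : p'.comp (-X) = (-1 : ℝ) ^ k • p' := by
    refine hp'.parity h' hk fun g hg => ?_
    rw [key, key, ← hsym ((1 - X ^ 2) * g)]
    · simp
    · refine natDegree_mul_le.trans ?_
      have : (1 - X ^ 2 : ℝ[X]).natDegree ≤ 2 := by compute_degree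
      omega
  have hpar : ∀ j ≤ l, ∀ p, IsOP (l + 2) w r j p → p.comp (-X) = (-1 : ℝ) ^ j • p := by
    intro j hj p hp
    exact hp.parity h (by omega) fun g hg => hsym g (by omega)
  -- `ε` is the parity of `k`; modulo `1 - X²` an orthogonal polynomial `p` of that parity
  -- is `p(1) X ^ ε`.
  set ε := k % 2 with hε
  have formula : ∀ j ≤ k, j % 2 = ε → ∀ p, IsOP (l + 2) w r j p →
      dI (l + 2) w r (p' * p) = p.eval 1 * dI (l + 2) w r (p' * X ^ ε) := by
    intro j hj hjε p hp
    have hneg : p.eval (-1) = (-1) ^ j * p.eval 1 := by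
      have := congrArg (fun q => q.eval 1) (hpar j (by omega) p hp)
      simpa using this
    have hpow : ((-1 : ℝ)) ^ ε = (-1) ^ j := by
      rw [← hjε]; exact (neg_one_pow_eq_pow_mod_two j).symm
    have hdvd : (X - C (1 : ℝ)) * (X - C (-1)) ∣ p - C (p.eval 1) * X ^ ε := by
      refine IsCoprime.mul_dvd ?_ (dvd_iff_isRoot.2 ?_) (dvd_iff_isRoot.2 ?_)
      · exact isCoprime_X_sub_C_of_isUnit_sub (by norm_num)
      · simp
      · simp [hneg, hpow]; ring
    obtain ⟨s, hs⟩ := hdvd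
    have hsd : s.degree < k := by
      by_cases hs0 : s = 0
      · simp [hs0]
      have hεj : ε ≤ j := by omega
      have hd : (p - C (p.eval 1) * X ^ ε).natDegree ≤ j := by
        refine (natDegree_sub_le _ _).trans (max_le hp.deg.le ?_)
        exact (natDegree_C_mul_X_pow_le _ _).trans hεj
      rw [hs, natDegree_mul (mul_ne_zero (X_sub_C_ne_zero _) (X_sub_C_ne_zero _)) hs0,
        natDegree_mul (X_sub_C_ne_zero _) (X_sub_C_ne_zero _), natDegree_X_sub_C,
        natDegree_X_sub_C] at hd
      rw [degree_eq_natDegree hs0]; exact_mod_cast (by omega : s.natDegree < k)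
    have h2 := hp'.orth s hsd
    rw [key] at h2
    have e : p' * p = p.eval 1 • (p' * X ^ ε) - (1 - X ^ 2) * (p' * s) := by
      rw [smul_eq_C_mul]
      simp only [map_neg, map_one] at hs
      linear_combination p' * hs
    rw [e, map_sub, h2, map_smul, smul_eq_mul, sub_zero]
  have heval : ∀ j ≤ l, ∀ p, IsOP (l + 2) w r j p → 0 < p.eval 1 := by
    intro j hj p hp
    rw [← h1]; exact hp.eval_top_pos h (by omega)
  obtain ⟨p, hp⟩ := exists_isOP h (show k ≤ l + 2 by omega)
  have hpos : 0 < dI (l + 2) w r (p' * X ^ ε) := by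
    have h1 := formula k le_rfl rfl p hp
    rw [hp.pair_self hp'.monic hp'.deg] at h1
    have h2 := hp.pos h (by omega)
    rw [h1] at h2
    exact (pos_iff_pos_of_mul_pos h2).1 (heval k hk p hp)
  refine mem_cone_of_coeff_nonneg h hD (k := k + 1) (by omega) (fun j hj => hOP j (by omega))
    (by rw [hp'.degree_eq]; exact_mod_cast k.lt_succ_self) ?_
  intro j hj q hq
  by_cases hjε : j % 2 = ε
  · rw [formula j (by omega) hjε q hq]
    exact mul_nonneg (heval j (by omega) q hq).le hpos.le
  · have hcomp : (p' * q).comp (-X) = -(p' * q) := by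
      rw [mul_comp, hpar', hpar j (by omega) q hq, smul_mul_smul_comm, ← pow_add,
        Odd.neg_one_pow (Nat.odd_iff.2 (by omega)), neg_one_smul]
    have := hsym (p' * q) (natDegree_mul_le.trans (by rw [hp'.deg, hq.deg]; omega))
    rw [hcomp, map_neg] at this
    linarith
end

/-! ### Hermite interpolation and its error -/

noncomputable section
open Polynomial Set

/-- Rolle's theorem for finitely many zeros. The new zeros are disjoint from the old ones, so that
double zeros can be added to them later. -/
lemma rolle_finset {φ φ' : ℝ → ℝ} {s : Set ℝ} (hs : s.OrdConnected) (hsub : s ⊆ Icc (-1) 1)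
    (hc : ContinuousOn φ s) (hd : ∀ t ∈ Ioo (-1 : ℝ) 1, HasDerivAt φ (φ' t) t) (Z : Finset ℝ)
    (hZ : ∀ z ∈ Z, z ∈ s ∧ φ z = 0) :
    ∃ Z' : Finset ℝ, Z.card ≤ Z'.card + 1 ∧ Disjoint Z Z' ∧
      (∀ z ∈ Z', z ∈ Ioo (-1 : ℝ) 1 ∧ φ' z = 0) ∧ ∀ z ∈ Z', ∃ y ∈ Z, z < y := by
  induction Z using Finset.induction_on_max with
  | empty => exact ⟨∅, by simp⟩
  | insert a Z hmax ih =>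
    obtain ⟨Z', h1, h2, h3, h4⟩ := ih fun z hz => hZ z (Finset.mem_insert_of_mem hz)
    have haZ : a ∉ Z := fun h => lt_irrefl _ (hmax a h)
    rcases Z.eq_empty_or_nonempty with rfl | hne
    · exact ⟨∅, by simp⟩
    set b := Z.max' hne with hb
    have hbZ : b ∈ Z := Z.max'_mem hne
    have hba : b < a := hmax b hbZ
    have hbs := hZ b (Finset.mem_insert_of_mem hbZ)
    have has := hZ a (Finset.mem_insert_self a Z)
    obtain ⟨ξ, hξ, hξ0⟩ := exists_hasDerivAt_eq_zero hba (hc.mono (hs.out hbs.1 has.1))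
      (by rw [hbs.2, has.2])
      fun x hx => hd x ⟨(hsub hbs.1).1.trans_lt hx.1, hx.2.trans_le (hsub has.1).2⟩
    have hZ'b : ∀ z ∈ Z', z < b := fun z hz => by
      obtain ⟨y, hy, hzy⟩ := h4 z hz
      exact hzy.trans_le (Z.le_max' y hy)
    refine ⟨insert ξ Z', ?_, ?_, ?_, ?_⟩
    · rw [Finset.card_insert_of_notMem haZ, Finset.card_insert_of_notMem]
      · omega
      · intro h; exact lt_asymm hξ.1 (hZ'b ξ h)
    · rw [Finset.disjoint_left]
      intro z hz hz'
      rw [Finset.mem_insert] at hz hz'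
      rcases hz with rfl | hz <;> rcases hz' with rfl | hz'
      · exact lt_irrefl _ hξ.2
      · exact lt_asymm hba (hZ'b _ hz')
      · exact absurd (Z.le_max' _ hz) (not_le.2 hξ.1)
      · exact Finset.disjoint_left.1 h2 hz hz'
    · intro z hz
      rw [Finset.mem_insert] at hz
      rcases hz with rfl | hz
      · exact ⟨⟨(hsub hbs.1).1.trans_lt hξ.1, hξ.2.trans_le (hsub has.1).2⟩, hξ0⟩
      · exact h3 z hz
    · intro z hz
      rw [Finset.mem_insert] at hz
      rcases hz with rfl | hz
      · exact ⟨a, Finset.mem_insert_self _ _, hξ.2⟩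
      · exact ⟨a, Finset.mem_insert_self _ _, (hZ'b z hz).trans hba⟩

lemma rolle_iter {Φ : ℕ → ℝ → ℝ} (j k : ℕ)
    (hd : ∀ i < k + j, ∀ t ∈ Ioo (-1 : ℝ) 1, HasDerivAt (Φ i) (Φ (i + 1) t) t) (Z : Finset ℝ)
    (hZ : ∀ z ∈ Z, z ∈ Ioo (-1 : ℝ) 1 ∧ Φ k z = 0) (hcard : j + 1 ≤ Z.card) :
    ∃ ξ ∈ Ioo (-1 : ℝ) 1, Φ (k + j) ξ = 0 := by
  induction j generalizing k Z with
  | zero =>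
    obtain ⟨z, hz⟩ := Finset.card_pos.1 (by omega : 0 < Z.card)
    exact ⟨z, (hZ z hz).1, (hZ z hz).2⟩
  | succ j ih =>
    obtain ⟨Z', h1, -, h3, -⟩ := rolle_finset (φ := Φ k) (φ' := Φ (k + 1)) ordConnected_Ioo
      Ioo_subset_Icc_self
      (fun t ht => (hd k (by omega) t ht).continuousAt.continuousWithinAt)
      (hd k (by omega)) Z hZ
    obtain ⟨ξ, hξ, h0⟩ := ih (k + 1) (fun i hi => hd i (by omega)) Z' h3 (by omega)
    exact ⟨ξ, hξ, by rwa [show k + (j + 1) = k + 1 + j by ring]⟩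

/-- Rolle's theorem with simple zeros `S` and double interior zeros `S₂ ⊆ S`. -/
lemma exists_zero_deriv {Φ : ℕ → ℝ → ℝ} {n : ℕ} (hn : 1 ≤ n)
    (hc : ContinuousOn (Φ 0) (Icc (-1) 1))
    (hd : ∀ k < n, ∀ t ∈ Ioo (-1 : ℝ) 1, HasDerivAt (Φ k) (Φ (k + 1) t) t) (S S₂ : Finset ℝ)
    (hS : ∀ z ∈ S, z ∈ Icc (-1 : ℝ) 1 ∧ Φ 0 z = 0)
    (hS₂ : ∀ z ∈ S₂, z ∈ S ∧ z ∈ Ioo (-1 : ℝ) 1 ∧ Φ 1 z = 0)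
    (hcard : n + 1 ≤ S.card + S₂.card) : ∃ ξ ∈ Ioo (-1 : ℝ) 1, Φ n ξ = 0 := by
  obtain ⟨Z', h1, h2, h3, -⟩ := rolle_finset (φ := Φ 0) (φ' := Φ 1) ordConnected_Icc
    subset_rfl hc (hd 0 (by omega)) S hS
  obtain ⟨ξ, hξ, h0⟩ := rolle_iter (Φ := Φ) (n - 1) 1 (fun i hi => hd i (by omega)) (S₂ ∪ Z')
    (by
      intro z hz
      rcases Finset.mem_union.1 hz with hz | hz
      · exact (hS₂ z hz).2
      · exact h3 z hz)
    (by
      rw [Finset.card_union_of_disjoint]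
      · omega
      · exact h2.mono_left fun z hz => (hS₂ z hz).1)
  exact ⟨ξ, hξ, by rwa [show 1 + (n - 1) = n by omega] at h0⟩

lemma iterate_derivative_eval_of_degree {q : ℝ[X]} {n : ℕ} (hq : q.degree < (n + 1 : ℕ)) (t : ℝ) :
    (derivative^[n] q).eval t = n.factorial * q.coeff n := by
  have h : derivative^[n] q = C (n.factorial * q.coeff n) := by
    ext j
    rw [coeff_iterate_derivative, coeff_C]
    rcases Nat.eq_zero_or_pos j with rfl | hj
    · simp [Nat.descFactorial_self]
    · rw [degree_lt_iff_coeff_zero] at hq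
      rw [hq (j + n) (by omega)]
      simp [hj.ne']
  rw [h, eval_C]

/-- A function `F 0` on `[-1,1]` together with its successive derivatives `F k` on `(-1,1)`, of
which the first `M` are positive and the next one is negative. -/
structure DerivSeq (M : ℕ) (F : ℕ → ℝ → ℝ) : Prop where
  cont : ContinuousOn (F 0) (Icc (-1) 1)
  deriv : ∀ k ≤ M, ∀ t ∈ Ioo (-1 : ℝ) 1, HasDerivAt (F k) (F (k + 1) t) t
  pos : ∀ k, 1 ≤ k → k ≤ M → ∀ t ∈ Ioo (-1 : ℝ) 1, 0 < F k t
  neg : ∀ t ∈ Ioo (-1 : ℝ) 1, F (M + 1) t < 0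

/-- `h` is a Hermite interpolant of `F 0` with node set `S`, of which the interior nodes `S₂`
are double. -/
structure Herm (F : ℕ → ℝ → ℝ) (S S₂ : Finset ℝ) (h : ℝ[X]) : Prop where
  mem : ∀ z ∈ S, z ∈ Icc (-1 : ℝ) 1
  mem₂ : ∀ z ∈ S₂, z ∈ S ∧ z ∈ Ioo (-1 : ℝ) 1
  val : ∀ z ∈ S, h.eval z = F 0 z
  der : ∀ z ∈ S₂, h.derivative.eval z = F 1 z
  deg : h.degree < (S.card + S₂.card : ℕ)

/-- The monic polynomial with simple roots `S` and additional roots `S₂`. -/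
def nodal (S S₂ : Finset ℝ) : ℝ[X] := (∏ s ∈ S, (X - C s)) * ∏ s ∈ S₂, (X - C s)

lemma nodal_monic (S S₂ : Finset ℝ) : (nodal S S₂).Monic :=
  (monic_prod_of_monic _ _ fun _ _ => monic_X_sub_C _).mul
    (monic_prod_of_monic _ _ fun _ _ => monic_X_sub_C _)

lemma nodal_natDegree (S S₂ : Finset ℝ) : (nodal S S₂).natDegree = S.card + S₂.card := by
  rw [nodal, (monic_prod_of_monic _ _ fun _ _ => monic_X_sub_C _).natDegree_mul
    (monic_prod_of_monic _ _ fun _ _ => monic_X_sub_C _),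
    natDegree_prod_of_monic _ _ fun _ _ => monic_X_sub_C _,
    natDegree_prod_of_monic _ _ fun _ _ => monic_X_sub_C _]
  simp

lemma prod_X_sub_C_eval_ne {S : Finset ℝ} {t : ℝ} (ht : t ∉ S) :
    (∏ s ∈ S, (X - C s)).eval t ≠ 0 := by
  rw [eval_prod, Finset.prod_ne_zero_iff]
  intro s hs
  simp only [eval_sub, eval_X, eval_C]
  rw [sub_ne_zero]; rintro rfl; exact ht hs

lemma prod_X_sub_C_eval_eq {S : Finset ℝ} {t : ℝ} (ht : t ∈ S) :
    (∏ s ∈ S, (X - C s)).eval t = 0 := by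
  rw [eval_prod, Finset.prod_eq_zero ht]; simp

lemma nodal_eval_eq {S S₂ : Finset ℝ} {t : ℝ} (ht : t ∈ S) : (nodal S S₂).eval t = 0 := by
  rw [nodal, eval_mul, prod_X_sub_C_eval_eq ht, zero_mul]

lemma nodal_derivative_eval_eq {S S₂ : Finset ℝ} {t : ℝ} (ht : t ∈ S) (ht₂ : t ∈ S₂) :
    (nodal S S₂).derivative.eval t = 0 := by
  rw [nodal, derivative_mul, eval_add, eval_mul, eval_mul, prod_X_sub_C_eval_eq ht,
    prod_X_sub_C_eval_eq ht₂]; simp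

lemma nodal_derivative_eval_ne {S S₂ : Finset ℝ} {t : ℝ} (ht : t ∈ S) (ht₂ : t ∉ S₂) :
    (nodal S S₂).derivative.eval t ≠ 0 := by
  rw [nodal, ← Finset.mul_prod_erase S _ ht]
  simp only [derivative_mul, derivative_sub, derivative_X, derivative_C, sub_zero, one_mul,
    eval_add, eval_mul, eval_sub, eval_X, eval_C, sub_self, zero_mul, add_zero]
  exact mul_ne_zero (prod_X_sub_C_eval_ne (by simp)) (prod_X_sub_C_eval_ne ht₂)

variable {M : ℕ} {F : ℕ → ℝ → ℝ}

/-- The leading coefficient of a Hermite interpolant is a value of a derivative. -/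
lemma Herm.exists_coeff (hF : DerivSeq M F) {S S₂ : Finset ℝ} {q : ℝ[X]} (hq : Herm F S S₂ q)
    {n : ℕ} (hn : 1 ≤ n) (hnM : n ≤ M + 1) (hcard : S.card + S₂.card = n + 1) :
    ∃ ξ ∈ Ioo (-1 : ℝ) 1, F n ξ = n.factorial * q.coeff n := by
  obtain ⟨ξ, hξ, h0⟩ := exists_zero_deriv (Φ := fun k t => F k t - (derivative^[k] q).eval t) hn
    (hF.cont.sub q.continuous.continuousOn)
    (by
      intro k hk t ht
      rw [Function.iterate_succ_apply']
      exact (hF.deriv k (by omega) t ht).sub ((derivative^[k] q).hasDerivAt t)) S S₂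
    (fun z hz => ⟨hq.mem z hz, by simp [hq.val z hz]⟩)
    (fun z hz => ⟨(hq.mem₂ z hz).1, (hq.mem₂ z hz).2, by simp [hq.der z hz]⟩) hcard.ge
  refine ⟨ξ, hξ, ?_⟩
  rw [← iterate_derivative_eval_of_degree (hcard ▸ hq.deg) ξ]
  exact sub_eq_zero.1 h0

lemma Herm.coeff_add_smul_nodal {S S₂ : Finset ℝ} {h : ℝ[X]} (hh : Herm F S S₂ h) (a : ℝ) :
    (h + a • nodal S S₂).coeff (S.card + S₂.card) = a := by
  have h1 : h.coeff (S.card + S₂.card) = 0 := coeff_eq_zero_of_degree_lt hh.deg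
  have h2 : (nodal S S₂).coeff (S.card + S₂.card) = 1 := by
    rw [← nodal_natDegree]; exact (nodal_monic S S₂).coeff_natDegree
  simp [h1, h2]

lemma Herm.degree_add_smul_nodal {S S₂ : Finset ℝ} {h : ℝ[X]} (hh : Herm F S S₂ h) (a : ℝ) :
    (h + a • nodal S S₂).degree < (S.card + S₂.card + 1 : ℕ) := by
  refine (degree_add_le _ _).trans_lt (max_lt (hh.deg.trans (by exact_mod_cast Nat.lt_succ_self _))
    ((degree_smul_le _ _).trans_lt ?_))
  rw [degree_eq_natDegree (nodal_monic S S₂).ne_zero, nodal_natDegree]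
  exact_mod_cast Nat.lt_succ_self _

lemma Herm.coeff_pos (hF : DerivSeq M F) {S S₂ T T₂ : Finset ℝ} {h : ℝ[X]} (hh : Herm F S S₂ h)
    {a : ℝ} (hq : Herm F T T₂ (h + a • nodal S S₂)) (hle : S.card + S₂.card ≤ M)
    (hcard : T.card + T₂.card = S.card + S₂.card + 1) (h1 : 1 ≤ S.card + S₂.card) : 0 < a := by
  obtain ⟨ξ, hξ, h0⟩ := hq.exists_coeff hF h1 (by omega) hcard
  rw [hh.coeff_add_smul_nodal] at h0
  have := hF.pos _ h1 hle ξ hξ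
  rw [h0] at this
  exact (pos_iff_pos_of_mul_pos this).1 (by positivity)

lemma Herm.insert_val {S S₂ : Finset ℝ} {h : ℝ[X]} (hh : Herm F S S₂ h) {t : ℝ}
    (ht : t ∈ Icc (-1 : ℝ) 1) (htS : t ∉ S) :
    Herm F (insert t S) S₂ (h + ((F 0 t - h.eval t) / (nodal S S₂).eval t) • nodal S S₂) where
  mem z hz := by
    rcases Finset.mem_insert.1 hz with rfl | hz
    exacts [ht, hh.mem z hz]
  mem₂ z hz := ⟨Finset.mem_insert_of_mem (hh.mem₂ z hz).1, (hh.mem₂ z hz).2⟩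
  val z hz := by
    rcases Finset.mem_insert.1 hz with rfl | hz
    · have : (nodal S S₂).eval z ≠ 0 := by
        rw [nodal, eval_mul]
        exact mul_ne_zero (prod_X_sub_C_eval_ne htS)
          (prod_X_sub_C_eval_ne fun h => htS (hh.mem₂ z h).1)
      simp [this]
    · simp [nodal_eval_eq hz, hh.val z hz]
  der z hz := by
    simp [nodal_derivative_eval_eq (hh.mem₂ z hz).1 hz, hh.der z hz]
  deg := by
    have := hh.degree_add_smul_nodal ((F 0 t - h.eval t) / (nodal S S₂).eval t)
    rw [Finset.card_insert_of_notMem htS]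
    convert this using 2
    omega

lemma Herm.insert_der {S S₂ : Finset ℝ} {h : ℝ[X]} (hh : Herm F S S₂ h) {t : ℝ}
    (ht : t ∈ Ioo (-1 : ℝ) 1) (htS : t ∈ S) (htS₂ : t ∉ S₂) :
    Herm F S (insert t S₂) (h + ((F 1 t - h.derivative.eval t) /
      (nodal S S₂).derivative.eval t) • nodal S S₂) where
  mem := hh.mem
  mem₂ z hz := by
    rcases Finset.mem_insert.1 hz with rfl | hz
    exacts [⟨htS, ht⟩, hh.mem₂ z hz]
  val z hz := by simp [nodal_eval_eq hz, hh.val z hz]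
  der z hz := by
    rcases Finset.mem_insert.1 hz with rfl | hz
    · simp [nodal_derivative_eval_ne htS htS₂]
    · simp [nodal_derivative_eval_eq (hh.mem₂ z hz).1 hz, hh.der z hz]
  deg := by
    have := hh.degree_add_smul_nodal ((F 1 t - h.derivative.eval t) /
      (nodal S S₂).derivative.eval t)
    rw [Finset.card_insert_of_notMem htS₂]
    convert this using 2
    omega

/-- The interpolation error has the sign opposite to the nodal polynomial. -/
lemma Herm.lt_of_nodal_neg (hF : DerivSeq M F) {S S₂ : Finset ℝ} {h : ℝ[X]} (hh : Herm F S S₂ h)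
    (hcard : S.card + S₂.card = M + 1) {t : ℝ} (ht : t ∈ Icc (-1 : ℝ) 1) (htS : t ∉ S)
    (hneg : (nodal S S₂).eval t < 0) : h.eval t < F 0 t := by
  have hq := hh.insert_val ht htS
  set a := (F 0 t - h.eval t) / (nodal S S₂).eval t with ha
  obtain ⟨ξ, hξ, h0⟩ := hq.exists_coeff hF (n := M + 1) (by omega) le_rfl (by
    rw [Finset.card_insert_of_notMem htS]; omega)
  have hc := hh.coeff_add_smul_nodal a
  rw [hcard] at hc
  rw [hc] at h0
  have hn := hF.neg ξ hξ
  rw [h0] at hn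
  have ha0 : a < 0 := by
    by_contra hcon
    push Not at hcon
    have : 0 ≤ ((M + 1).factorial : ℝ) * a := by positivity
    linarith
  have : F 0 t - h.eval t = a * (nodal S S₂).eval t := (div_mul_cancel₀ _ hneg.ne).symm
  nlinarith [mul_pos_of_neg_of_neg ha0 hneg]
end

/-! ### Newton expansion of the Hermite interpolant -/

noncomputable section
open Polynomial Set
variable {M : ℕ} {F : ℕ → ℝ → ℝ}

/-- The Newton form of the Hermite interpolant at `B`, the double nodes `r i` and `1`. The nodes are
adjoined one at a time; each step adds a multiple `a • N` of the current nodal polynomial `N ∈ D`,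
with `a > 0` in degree at least one, and `Q` is any property preserved by such steps. -/
lemma hermite_chain (hF : DerivSeq M F) {D : Set ℝ[X]} {Q : ℕ → ℝ[X] → Prop} (hQ0 : Q 0 0)
    (hQ : ∀ (k : ℕ) (h : ℝ[X]) (a : ℝ) (N : ℝ[X]), k ≤ M → N.Monic → N.natDegree = k →
      N ∈ D → (1 ≤ k → 0 < a) → Q k h → Q (k + 1) (h + a • N))
    {B : Finset ℝ} (hB : B = ∅ ∨ B = {-1}) {l : ℕ} {r : ℕ → ℝ}
    (hr : ∀ i < l, r i ∈ Ioo (-1 : ℝ) 1) (hinj : InjOn r (Finset.range l))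
    (hM : B.card + 2 * l = M) (hone : (1 : ℝ[X]) ∈ D)
    (hD1 : ∀ j ≤ l, (∏ s ∈ B, (X - C s)) * ((∏ i ∈ Finset.range j, (X - C (r i))) *
      ∏ i ∈ Finset.range j, (X - C (r i))) ∈ D)
    (hD2 : ∀ j < l, (∏ s ∈ B, (X - C s)) * ((∏ i ∈ Finset.range (j + 1), (X - C (r i))) *
      ∏ i ∈ Finset.range j, (X - C (r i))) ∈ D) :
    ∃ h, Herm F (insert 1 (B ∪ (Finset.range l).image r)) ((Finset.range l).image r) h ∧
      Q (M + 1) h := by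
  have hBI : ∀ z ∈ B, z = -1 := by
    rcases hB with rfl | rfl <;> simp
  have hBmem : ∀ i < l, r i ∉ B := fun i hi h => by
    have := (hr i hi).1
    rw [hBI _ h] at this
    exact lt_irrefl _ this
  have hdisj : ∀ j ≤ l, Disjoint B ((Finset.range j).image r) := by
    intro j hj
    rw [Finset.disjoint_right]
    intro z hz
    obtain ⟨i, hi, rfl⟩ := Finset.mem_image.1 hz
    exact hBmem i (by simp at hi; omega)
  have hinj' : ∀ j ≤ l, InjOn r (Finset.range j) := fun j hj =>
    hinj.mono (by simpa using hj)
  have hnm : ∀ j < l, r j ∉ (Finset.range j).image r := by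
    intro j hj h
    obtain ⟨i, hi, hij⟩ := Finset.mem_image.1 h
    simp only [Finset.mem_range] at hi
    have := hinj (by simp; omega) (by simpa using hj) hij
    omega
  have hprod : ∀ j ≤ l, ∏ s ∈ (Finset.range j).image r, (X - C s)
      = ∏ i ∈ Finset.range j, (X - C (r i)) := fun j hj =>
    Finset.prod_image (hinj' j hj)
  have hcardR : ∀ j ≤ l, ((Finset.range j).image r).card = j := fun j hj => by
    rw [Finset.card_image_of_injOn (hinj' j hj), Finset.card_range]
  have hcardU : ∀ j ≤ l, (B ∪ (Finset.range j).image r).card = B.card + j := fun j hj => by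
    rw [Finset.card_union_of_disjoint (hdisj j hj), hcardR j hj]
  have hsucc : ∀ j, (Finset.range (j + 1)).image r = insert (r j) ((Finset.range j).image r) :=
    fun j => by rw [Finset.range_add_one, Finset.image_insert]
  have hempty : Herm F ∅ ∅ 0 := ⟨by simp, by simp, by simp, by simp, by simp⟩
  have hmain : ∀ j ≤ l, ∃ h, Herm F (B ∪ (Finset.range j).image r) ((Finset.range j).image r) h ∧
      Q (B.card + 2 * j) h := by
    intro j
    induction j with
    | zero =>
      intro _
      rcases hB with rfl | rfl
      · exact ⟨0, by simpa using hempty, by simpa using hQ0⟩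
      · have h1 := hempty.insert_val (t := -1) (by simp) (by simp)
        refine ⟨_, by simpa using h1, ?_⟩
        have := hQ 0 0 ((F 0 (-1) - (0 : ℝ[X]).eval (-1)) / (nodal ∅ ∅).eval (-1)) (nodal ∅ ∅)
          (by omega) (nodal_monic _ _) (by rw [nodal_natDegree]; simp)
          (by simpa [nodal] using hone) (by omega) hQ0
        simpa using this
    | succ j ih =>
      intro hj
      obtain ⟨h, hh, hQh⟩ := ih (by omega)
      have hrj : r j ∉ B ∪ (Finset.range j).image r := by
        rw [Finset.mem_union]; push Not; exact ⟨hBmem j (by omega), hnm j (by omega)⟩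
      have c1 : (B ∪ (Finset.range j).image r).card + ((Finset.range j).image r).card
          = B.card + 2 * j := by
        rw [hcardU j (by omega), hcardR j (by omega)]; ring
      have hins : insert (r j) (B ∪ (Finset.range j).image r)
          = B ∪ (Finset.range (j + 1)).image r := by rw [hsucc, Finset.union_insert]
      have hv := hh.insert_val (Ioo_subset_Icc_self (hr j (by omega))) hrj
      have hva := fun hk => hh.coeff_pos hF hv (by omega) (by
        rw [Finset.card_insert_of_notMem hrj]; omega) hk
      have hQ1 := hQ _ h _ _ (by omega) (nodal_monic _ _) ((nodal_natDegree _ _).trans c1)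
        (by rw [nodal, Finset.prod_union (hdisj j (by omega)), hprod j (by omega), mul_assoc]
            exact hD1 j (by omega)) (by rw [← c1]; exact hva) hQh
      set h₁ := h + ((F 0 (r j) - h.eval (r j)) /
        (nodal (B ∪ (Finset.range j).image r) ((Finset.range j).image r)).eval (r j)) •
        nodal (B ∪ (Finset.range j).image r) ((Finset.range j).image r)
      rw [hins] at hv
      have c2 : (B ∪ (Finset.range (j + 1)).image r).card + ((Finset.range j).image r).card
          = B.card + 2 * j + 1 := by
        rw [hcardU (j + 1) hj, hcardR j (by omega)]; ring
      have hd := hv.insert_der (hr j (by omega)) (by rw [hsucc]; simp) (hnm j (by omega))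
      have hda := fun hk => hv.coeff_pos hF hd (by omega) (by
        rw [Finset.card_insert_of_notMem (hnm j (by omega))]; omega) hk
      have hQ2 := hQ _ h₁ _ _ (by omega) (nodal_monic _ _) ((nodal_natDegree _ _).trans c2)
        (by rw [nodal, Finset.prod_union (hdisj (j + 1) (by omega)), hprod j (by omega),
              hprod (j + 1) (by omega), mul_assoc]
            exact hD2 j (by omega)) (by rw [← c2]; exact hda) hQ1
      rw [← hsucc] at hd
      exact ⟨_, hd, hQ2⟩
  obtain ⟨h, hh, hQh⟩ := hmain l le_rfl
  have h1 : (1 : ℝ) ∉ B ∪ (Finset.range l).image r := by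
    rw [Finset.mem_union]
    rintro (h | h)
    · have := hBI _ h; norm_num at this
    · obtain ⟨i, hi, hi1⟩ := Finset.mem_image.1 h
      have := (hr i (by simpa using hi)).2
      linarith
  have c1 : (B ∪ (Finset.range l).image r).card + ((Finset.range l).image r).card = M := by
    rw [hcardU l le_rfl, hcardR l le_rfl]; omega
  have hv := hh.insert_val (t := 1) (by simp) h1
  have hva := fun hk => hh.coeff_pos hF hv (by omega) (by
    rw [Finset.card_insert_of_notMem h1]; omega) hk
  rw [hM] at hQh
  exact ⟨_, hv, hQ _ h _ _ le_rfl (nodal_monic _ _) ((nodal_natDegree _ _).trans c1)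
    (by rw [nodal, Finset.prod_union (hdisj l le_rfl), hprod l le_rfl, mul_assoc]
        exact hD1 l le_rfl) (by rw [← c1]; exact hva) hQh⟩

/-- The nodal polynomial of the interpolation is negative off the nodes. -/
lemma nodal_neg {B : Finset ℝ} (hB : B = ∅ ∨ B = {-1}) {R : Finset ℝ} (hR : Disjoint B R)
    (h1 : (1 : ℝ) ∉ B ∪ R) {t : ℝ} (ht : t ∈ Icc (-1 : ℝ) 1) (htS : t ∉ insert 1 (B ∪ R)) :
    (nodal (insert 1 (B ∪ R)) R).eval t < 0 := by
  rw [nodal, Finset.prod_insert h1, Finset.prod_union hR]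
  simp only [Finset.mem_insert, Finset.mem_union, not_or] at htS
  have hG := mul_self_pos.2 (prod_X_sub_C_eval_ne htS.2.2)
  have hPB : 0 < (∏ s ∈ B, (X - C s)).eval t := by
    rcases hB with rfl | rfl
    · simp
    · have : t ≠ -1 := by simpa using htS.2.1
      have := lt_of_le_of_ne ht.1 (Ne.symm this)
      simp; linarith
  have ht1 : t - 1 < 0 := by linarith [lt_of_le_of_ne ht.2 htS.1]
  have e : ((X - C 1) * ((∏ s ∈ B, (X - C s)) * ∏ s ∈ R, (X - C s)) *
      ∏ s ∈ R, (X - C s)).eval t = (t - 1) * ((∏ s ∈ B, (X - C s)).eval t *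
      ((∏ s ∈ R, (X - C s)).eval t * (∏ s ∈ R, (X - C s)).eval t)) := by
    simp only [eval_mul, eval_sub, eval_X, eval_C]; ring
  rw [e]
  exact mul_neg_of_neg_of_pos ht1 (mul_pos hPB hG)

/-- The derivatives of orders `1` to `M` are strictly positive: `f^{(M)}` is nonnegative and strictly
decreasing on an open interval, and going down in order each derivative is nonnegative and strictly
increasing. -/
lemma derivSeq_of_hyp (f : ℝ → ℝ) (hfc : ContinuousOn f (Icc (-1) 1))
    (hdiff : ∀ k < M + 1,
      DifferentiableOn ℝ (iteratedDerivWithin k f (Ioo (-1) 1)) (Ioo (-1) 1))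
    (habs : ∀ k ≤ M, ∀ s ∈ Ioo (-1 : ℝ) 1, 0 ≤ iteratedDerivWithin k f (Ioo (-1) 1) s)
    (hlast : ∀ s ∈ Ioo (-1 : ℝ) 1, iteratedDerivWithin (M + 1) f (Ioo (-1) 1) s < 0) :
    DerivSeq M (fun k => iteratedDerivWithin k f (Ioo (-1) 1)) := by
  have hd : ∀ k ≤ M, ∀ t ∈ Ioo (-1 : ℝ) 1, HasDerivAt (iteratedDerivWithin k f (Ioo (-1) 1))
      (iteratedDerivWithin (k + 1) f (Ioo (-1) 1) t) t := by
    intro k hk t ht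
    have hn : Ioo (-1 : ℝ) 1 ∈ nhds t := isOpen_Ioo.mem_nhds ht
    have h1 := ((hdiff k (by omega)) t ht).hasDerivWithinAt.hasDerivAt hn
    rwa [← iteratedDerivWithin_succ] at h1
  refine ⟨by simpa using hfc, hd, ?_, hlast⟩
  have hM0 : ∀ t ∈ Ioo (-1 : ℝ) 1, 0 < iteratedDerivWithin M f (Ioo (-1) 1) t := by
    have hanti : StrictAntiOn (iteratedDerivWithin M f (Ioo (-1) 1)) (Ioo (-1) 1) := by
      refine strictAntiOn_of_deriv_neg (convex_Ioo _ _) (hdiff M (by omega)).continuousOn ?_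
      intro x hx
      rw [interior_Ioo] at hx
      rw [(hd M le_rfl x hx).deriv]; exact hlast x hx
    intro t ht
    have ht' : (t + 1) / 2 ∈ Ioo (-1 : ℝ) 1 := ⟨by linarith [ht.1], by linarith [ht.2]⟩
    exact (habs M le_rfl _ ht').trans_lt (hanti ht ht' (by linarith [ht.2]))
  intro k _ hk
  induction hk using Nat.decreasingInduction with
  | self => exact hM0
  | of_succ k hk ih =>
    have ih := ih (by omega)
    have hmono : StrictMonoOn (iteratedDerivWithin k f (Ioo (-1) 1)) (Ioo (-1) 1) := by
      refine strictMonoOn_of_deriv_pos (convex_Ioo _ _) (hdiff k (by omega)).continuousOn ?_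
      intro x hx
      rw [interior_Ioo] at hx
      rw [(hd k hk.le x hx).deriv]; exact ih x hx
    intro t ht
    have ht' : (t - 1) / 2 ∈ Ioo (-1 : ℝ) 1 := ⟨by linarith [ht.1], by linarith [ht.2]⟩
    exact (habs k hk.le _ ht').trans_lt (hmono ht' ht (by linarith [ht.1]))
end

/-! ### Rotation invariance of the uniform measure -/

noncomputable section
open MeasureTheory Metric Set Pointwise
open scoped RealInnerProductSpace
variable {d : ℕ}

/-- The action of a linear isometry on the unit sphere. -/
def rot (R : EuclideanSpace ℝ (Fin d) ≃ₗᵢ[ℝ] EuclideanSpace ℝ (Fin d)) (z : Sph d) : Sph d :=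
  ⟨R z, by have := z.2; simp only [mem_sphere_zero_iff_norm] at this ⊢; rw [R.norm_map, this]⟩

@[simp] lemma rot_coe (R : EuclideanSpace ℝ (Fin d) ≃ₗᵢ[ℝ] EuclideanSpace ℝ (Fin d)) (z : Sph d) :
    (rot R z : EuclideanSpace ℝ (Fin d)) = R z := rfl

lemma continuous_rot (R : EuclideanSpace ℝ (Fin d) ≃ₗᵢ[ℝ] EuclideanSpace ℝ (Fin d)) :
    Continuous (rot R) :=
  (R.continuous.comp continuous_subtype_val).subtype_mk _

lemma map_rot_toSphere (R : EuclideanSpace ℝ (Fin d) ≃ₗᵢ[ℝ] EuclideanSpace ℝ (Fin d)) :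
    ((volume : Measure (EuclideanSpace ℝ (Fin d))).toSphere).map (rot R)
      = (volume : Measure (EuclideanSpace ℝ (Fin d))).toSphere := by
  ext s hs
  rw [Measure.map_apply (continuous_rot R).measurable hs, Measure.toSphere_apply' _ hs,
    Measure.toSphere_apply' _ ((continuous_rot R).measurable hs)]
  congr 1
  have hpre : R ⁻¹' (Ioo (0 : ℝ) 1 • ((↑) '' s : Set (EuclideanSpace ℝ (Fin d))))
      = Ioo (0 : ℝ) 1 • ((↑) '' (rot R ⁻¹' s)) := by
    ext v
    simp only [mem_preimage, mem_smul, mem_image]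
    constructor
    · rintro ⟨a, ha, _, ⟨z, hz, rfl⟩, h⟩
      refine ⟨a, ha, _, ⟨rot R.symm z, ?_, rfl⟩, ?_⟩
      · have : rot R (rot R.symm z) = z := by ext1; simp
        rwa [this]
      · rw [rot_coe, ← map_smul, h, R.symm_apply_apply]
    · rintro ⟨a, ha, _, ⟨z, hz, rfl⟩, rfl⟩
      exact ⟨a, ha, _, ⟨_, hz, rfl⟩, by simp⟩
  rw [← hpre]
  exact R.measurePreserving.measure_preimage_equiv (f := R.toMeasurableEquiv) _

lemma integral_rot (R : EuclideanSpace ℝ (Fin d) ≃ₗᵢ[ℝ] EuclideanSpace ℝ (Fin d))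
    {φ : Sph d → ℝ} (hφ : Continuous φ) :
    ∫ z, φ (rot R z) ∂(sphσ d) = ∫ z, φ z ∂(sphσ d) := by
  have hmap : (sphσ d).map (rot R) = sphσ d := by
    rw [sphσ, Measure.map_smul, map_rot_toSphere]
  conv_rhs => rw [← hmap]
  rw [integral_map (continuous_rot R).aemeasurable hφ.aestronglyMeasurable]

/-- The isometry group of the sphere is transitive on pairs with a given inner product. -/
lemma exists_rot {x y x' y' : Sph d}
    (h : ⟪(x : EuclideanSpace ℝ (Fin d)), (y : EuclideanSpace ℝ (Fin d))⟫
      = ⟪(x' : EuclideanSpace ℝ (Fin d)), (y' : EuclideanSpace ℝ (Fin d))⟫) :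
    ∃ R : EuclideanSpace ℝ (Fin d) ≃ₗᵢ[ℝ] EuclideanSpace ℝ (Fin d), rot R x = x' ∧ rot R y = y' := by
  have hn : ∀ z : Sph d, ‖(z : EuclideanSpace ℝ (Fin d))‖ = 1 := fun z => by simpa using z.2
  -- The first reflection moves `y` to `y'`, the second one fixes `y'`.
  set R₁ := (ℝ ∙ ((y : EuclideanSpace ℝ (Fin d)) - y'))ᗮ.reflection
  have h1 : R₁ y = y' := Submodule.reflection_sub (by rw [hn, hn])
  set v := R₁ x
  have hv : ‖v‖ = 1 := by rw [R₁.norm_map, hn]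
  set R₂ := (ℝ ∙ (v - (x' : EuclideanSpace ℝ (Fin d))))ᗮ.reflection
  have h2 : R₂ v = x' := Submodule.reflection_sub (by rw [hv, hn])
  have h3 : R₂ y' = y' := by
    apply Submodule.reflection_mem_subspace_eq_self
    rw [Submodule.mem_orthogonal_singleton_iff_inner_right, inner_sub_left, ← h1,
      R₁.inner_map_map, h, h1, sub_self]
  exact ⟨R₁.trans R₂, Subtype.ext (by simpa using h2), Subtype.ext (by simp [h1, h3])⟩
end

/-! ### Zonal polynomials and convolution over a design -/

noncomputable section
open MeasureTheory Metric Set Polynomial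
open scoped RealInnerProductSpace
variable {d M : ℕ}

/-- The inner product of two points of the sphere. -/
def ip (x y : Sph d) : ℝ :=
  ⟪(x : EuclideanSpace ℝ (Fin d)), (y : EuclideanSpace ℝ (Fin d))⟫

lemma norm_sph (x : Sph d) : ‖(x : EuclideanSpace ℝ (Fin d))‖ = 1 := by simp

lemma ip_self (x : Sph d) : ip x x = 1 := by
  rw [ip, real_inner_self_eq_norm_sq, norm_sph]; norm_num

lemma ip_comm (x y : Sph d) : ip x y = ip y x := real_inner_comm _ _

lemma ip_eq_one_iff {x y : Sph d} : ip x y = 1 ↔ x = y := by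
  rw [ip, inner_eq_one_iff_of_norm_eq_one (norm_sph x) (norm_sph y), Subtype.ext_iff]

lemma ip_mem (x y : Sph d) : ip x y ∈ Icc (-1 : ℝ) 1 := by
  have := abs_real_inner_le_norm (x : EuclideanSpace ℝ (Fin d)) y
  rw [norm_sph, norm_sph, mul_one] at this
  exact abs_le.1 this

lemma continuous_ip : Continuous fun p : Sph d × Sph d => ip p.1 p.2 := by
  unfold ip; fun_prop

lemma ip_eq_sum (x y : Sph d) : ip x y
    = ∑ i, (x : EuclideanSpace ℝ (Fin d)) i * (y : EuclideanSpace ℝ (Fin d)) i := by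
  rw [ip, PiLp.inner_apply]; simp [mul_comm]

/-- The linear form `z ↦ ⟨x, z⟩` as a polynomial. -/
def lin (x : Sph d) : MvPolynomial (Fin d) ℝ :=
  ∑ i, MvPolynomial.C ((x : EuclideanSpace ℝ (Fin d)) i) * MvPolynomial.X i

lemma evalPt_aeval_lin (g : ℝ[X]) (x z : Sph d) :
    evalPt (aeval (lin x) g) z = g.eval (ip x z) := by
  have h : MvPolynomial.eval (fun i => (z : EuclideanSpace ℝ (Fin d)) i) (lin x) = ip x z := by
    rw [lin, map_sum, ip_eq_sum]; simp
  have := Polynomial.hom_eval₂ g (algebraMap ℝ (MvPolynomial (Fin d) ℝ))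
    (MvPolynomial.eval fun i => (z : EuclideanSpace ℝ (Fin d)) i) (lin x)
  rw [evalPt, aeval_def, this, h]
  have e : (MvPolynomial.eval fun i => (z : EuclideanSpace ℝ (Fin d)) i).comp
      (algebraMap ℝ (MvPolynomial (Fin d) ℝ)) = RingHom.id ℝ := by ext; simp
  rw [e, eval₂_id]

lemma totalDegree_aeval_lin (g : ℝ[X]) (x : Sph d) :
    (aeval (lin x) g).totalDegree ≤ g.natDegree := by
  have hl : (lin x).totalDegree ≤ 1 := by
    refine MvPolynomial.totalDegree_finsetSum_le fun i _ => ?_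
    refine (MvPolynomial.totalDegree_mul _ _).trans ?_
    rw [MvPolynomial.totalDegree_C, MvPolynomial.totalDegree_X]
  rw [aeval_eq_sum_range]
  refine MvPolynomial.totalDegree_finsetSum_le fun i hi => ?_
  refine (MvPolynomial.totalDegree_smul_le _ _).trans
    ((MvPolynomial.totalDegree_pow _ _).trans ?_)
  have : i ≤ g.natDegree := by simp at hi; omega
  nlinarith

variable {C₀ : Finset (Sph d)}

/-- The design average of `g₁(⟨x, ·⟩) g₂(⟨y, ·⟩)` equals its mean over the sphere, so it depends on
`⟨x, y⟩` only. -/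
lemma kernel_inv (hC : IsSphDesign d M C₀) {g₁ g₂ : ℝ[X]}
    (hg : g₁.natDegree + g₂.natDegree ≤ M) {x y x' y' : Sph d} (h : ip x y = ip x' y') :
    (∑ z ∈ C₀, g₁.eval (ip x z) * g₂.eval (ip y z)) / (C₀.card : ℝ)
      = (∑ z ∈ C₀, g₁.eval (ip x' z) * g₂.eval (ip y' z)) / (C₀.card : ℝ) := by
  have key : ∀ a b : Sph d, (∑ z ∈ C₀, g₁.eval (ip a z) * g₂.eval (ip b z)) / (C₀.card : ℝ)
      = ∫ z, g₁.eval (ip a z) * g₂.eval (ip b z) ∂(sphσ d) := by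
    intro a b
    have hP := hC.2 (aeval (lin a) g₁ * aeval (lin b) g₂)
      ((MvPolynomial.totalDegree_mul _ _).trans
        ((add_le_add (totalDegree_aeval_lin _ _) (totalDegree_aeval_lin _ _)).trans hg))
    have he : ∀ z, evalPt (aeval (lin a) g₁ * aeval (lin b) g₂) z
        = g₁.eval (ip a z) * g₂.eval (ip b z) := fun z => by
      rw [← evalPt_aeval_lin, ← evalPt_aeval_lin]; simp [evalPt]
    simpa only [he] using hP
  rw [key, key]
  obtain ⟨R, rfl, rfl⟩ := exists_rot h
  have hc : Continuous fun z => g₁.eval (ip (rot R x) z) * g₂.eval (ip (rot R y) z) := by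
    unfold ip; fun_prop
  rw [← integral_rot R hc]
  simp [ip, LinearIsometryEquiv.inner_map_map]

/-- Symmetrizing `g(at + bs)` over the sign of `s = ±√(1-t²)` gives a polynomial in `t`. -/
lemma exists_symm_poly (g : ℝ[X]) (a b : ℝ) : ∃ W : ℝ[X], W.natDegree ≤ g.natDegree ∧
    ∀ t s : ℝ, s ^ 2 = 1 - t ^ 2 → g.eval (t * a + s * b) + g.eval (t * a - s * b) = W.eval t := by
  have hpow : ∀ i : ℕ, ∃ E O : ℝ[X], E.natDegree ≤ i ∧ (X * O).natDegree ≤ i ∧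
      ∀ t s : ℝ, s ^ 2 = 1 - t ^ 2 → (t * a + s * b) ^ i = E.eval t + s * O.eval t := by
    intro i
    induction i with
    | zero => exact ⟨1, 0, by simp, by simp, by simp⟩
    | succ i ih =>
      obtain ⟨E, O, hE, hO, h⟩ := ih
      have hO' : O.natDegree ≤ i := by
        by_cases h0 : O = 0
        · simp [h0]
        · rw [natDegree_X_mul h0] at hO; omega
      have hX : ∀ {e : ℝ[X]} {c : ℝ}, e.natDegree ≤ i → (C c * (X * e)).natDegree ≤ i + 1 := by
        intro e c he
        refine (natDegree_C_mul_le _ _).trans (natDegree_mul_le.trans ?_)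
        rw [natDegree_X]; omega
      refine ⟨C a * (X * E) + (C b * O - C b * (X * (X * O))),
        C a * (X * O) + C b * E, ?_, ?_, ?_⟩
      · refine natDegree_add_le_of_degree_le (hX hE) 
          ((natDegree_sub_le_of_le (n := i + 1) ?_ (hX hO)).trans (max_self _).le)
        exact (natDegree_C_mul_le _ _).trans (by omega)
      · have : X * (C a * (X * O) + C b * E) = C a * (X * (X * O)) + C b * (X * E) := by ring
        rw [this]
        exact natDegree_add_le_of_degree_le (hX hO) (hX hE)
      · intro t s hs
        rw [pow_succ, h t s hs]
        simp only [eval_add, eval_mul, eval_C, eval_X, eval_sub]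
        linear_combination (b * O.eval t) * hs
  choose E O hE hO h using hpow
  refine ⟨∑ i ∈ Finset.range (g.natDegree + 1), C (2 * g.coeff i) * E i, ?_, ?_⟩
  · refine natDegree_sum_le_of_forall_le _ _ fun i hi => (natDegree_C_mul_le _ _).trans ?_
    have : i ≤ g.natDegree := by simp at hi; omega
    exact (hE i).trans this
  · intro t s hs
    rw [eval_eq_sum_range, eval_eq_sum_range, ← Finset.sum_add_distrib, eval_finsetSum]
    refine Finset.sum_congr rfl fun i _ => ?_
    have h2 := h i t (-s) (by simpa using hs)
    rw [neg_mul, ← sub_eq_add_neg] at h2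
    rw [h i t s hs, h2]
    simp; ring

/-- The design average of a product of two zonal polynomials is a zonal polynomial. -/
lemma exists_conv (hd : 2 ≤ d) (hC : IsSphDesign d M C₀) {g₁ g₂ : ℝ[X]}
    (hg : g₁.natDegree + g₂.natDegree ≤ M) : ∃ u : ℝ[X], u.natDegree ≤ g₁.natDegree ∧
    ∀ x y : Sph d, (∑ z ∈ C₀, g₁.eval (ip x z) * g₂.eval (ip y z)) / (C₀.card : ℝ)
      = u.eval (ip x y) := by
  let i0 : Fin d := ⟨0, by omega⟩
  let i1 : Fin d := ⟨1, by omega⟩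
  have h01 : i1 ≠ i0 := by simp [i0, i1]
  let e0 : EuclideanSpace ℝ (Fin d) := EuclideanSpace.single i0 1
  let e1 : EuclideanSpace ℝ (Fin d) := EuclideanSpace.single i1 1
  have hin0 : ∀ v : EuclideanSpace ℝ (Fin d), ⟪e0, v⟫ = v i0 := fun v => by
    simp [e0, EuclideanSpace.inner_single_left]
  have hin1 : ∀ v : EuclideanSpace ℝ (Fin d), ⟪e1, v⟫ = v i1 := fun v => by
    simp [e1, EuclideanSpace.inner_single_left]
  have hpt : ∀ t s : ℝ, s ^ 2 = 1 - t ^ 2 →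
      ∃ p : Sph d, (p : EuclideanSpace ℝ (Fin d)) = t • e0 + s • e1 := by
    intro t s hs
    have h2 : ‖t • e0 + s • e1‖ ^ 2 = 1 := by
      rw [← real_inner_self_eq_norm_sq, inner_add_left, real_inner_smul_left,
        real_inner_smul_left, hin0, hin1]
      simp [e0, e1, h01, h01.symm]
      nlinarith
    refine ⟨⟨t • e0 + s • e1, ?_⟩, rfl⟩
    rw [mem_sphere_zero_iff_norm]
    nlinarith [norm_nonneg (t • e0 + s • e1)]
  have hie : ∀ {t s} {p : Sph d}, (p : EuclideanSpace ℝ (Fin d)) = t • e0 + s • e1 → ∀ z : Sph d,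
      ip p z = t * (z : EuclideanSpace ℝ (Fin d)) i0 + s * (z : EuclideanSpace ℝ (Fin d)) i1 := by
    intro t s p hp z
    rw [ip, hp, inner_add_left, real_inner_smul_left, real_inner_smul_left, hin0, hin1]
  choose W hW hWe using fun z : Sph d => exists_symm_poly g₁
    ((z : EuclideanSpace ℝ (Fin d)) i0) ((z : EuclideanSpace ℝ (Fin d)) i1)
  refine ⟨C ((C₀.card : ℝ)⁻¹ / 2) * ∑ z ∈ C₀, C (g₂.eval ((z : EuclideanSpace ℝ (Fin d)) i0)) * W z,
    ?_, ?_⟩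
  · refine (natDegree_C_mul_le _ _).trans (natDegree_sum_le_of_forall_le _ _ fun z _ =>
      (natDegree_C_mul_le _ _).trans (hW z))
  · intro x y
    set t := ip x y
    have ht := ip_mem x y
    have hs : √(1 - t ^ 2) ^ 2 = 1 - t ^ 2 := Real.sq_sqrt (by nlinarith [ht.1, ht.2])
    set s := √(1 - t ^ 2)
    have hs' : (-s) ^ 2 = 1 - t ^ 2 := by rw [neg_sq, hs]
    have h10 : (0 : ℝ) ^ 2 = 1 - 1 ^ 2 := by norm_num
    obtain ⟨p, hp⟩ := hpt t s hs
    obtain ⟨p', hp'⟩ := hpt t (-s) hs'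
    obtain ⟨q, hq⟩ := hpt 1 0 h10
    have hpq : ip p q = t := by rw [hie hp, hq]; simp [e0, h01]
    have hpq' : ip p' q = t := by rw [hie hp', hq]; simp [e0, h01]
    have k1 := kernel_inv hC hg (x := x) (y := y) hpq.symm
    have k2 := kernel_inv hC hg (x := x) (y := y) hpq'.symm
    simp only [hie hp, hie hp', hie hq] at k1 k2
    simp only [zero_mul, add_zero, one_mul, neg_mul, ← sub_eq_add_neg] at k1 k2
    have : (∑ z ∈ C₀, g₁.eval (ip x z) * g₂.eval (ip y z)) / (C₀.card : ℝ)
      = ((∑ z ∈ C₀, g₁.eval (ip x z) * g₂.eval (ip y z)) / (C₀.card : ℝ) +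
      (∑ z ∈ C₀, g₁.eval (ip x z) * g₂.eval (ip y z)) / (C₀.card : ℝ)) / 2 := by ring
    rw [this]
    nth_rw 1 [k1]
    rw [k2, ← add_div, ← Finset.sum_add_distrib]
    simp only [eval_mul, eval_C, eval_finsetSum, ← hWe _ t s hs]
    rw [div_div, div_eq_inv_mul, mul_inv]
    congr 1
    refine Finset.sum_congr rfl fun z _ => by ring
end

/-! ### The distance distribution and positive definite polynomials -/

noncomputable section
open MeasureTheory Metric Set Polynomial
open scoped RealInnerProductSpace
variable {d M : ℕ} {C₀ : Finset (Sph d)}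

/-- The mean of `g(⟨x, y⟩)` over all pairs of points of `C₀`. -/
def pairAvg (C₀ : Finset (Sph d)) (g : ℝ[X]) : ℝ :=
  (∑ x ∈ C₀, (∑ y ∈ C₀, g.eval (ip x y)) / (C₀.card : ℝ)) / (C₀.card : ℝ)

lemma avg_const (hne : C₀.Nonempty) (c : ℝ) : (∑ _x ∈ C₀, c) / (C₀.card : ℝ) = c := by
  have : (C₀.card : ℝ) ≠ 0 := by simpa using hne.ne_empty
  rw [Finset.sum_const, nsmul_eq_mul]; field_simp

/-- By the design property the averages of `g(⟨x, ·⟩)` do not depend on the point `x`. -/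
lemma avg_eq_pairAvg (hd : 2 ≤ d) (hC : IsSphDesign d M C₀) {g : ℝ[X]} (hg : g.natDegree ≤ M)
    (x : Sph d) : (∑ y ∈ C₀, g.eval (ip x y)) / (C₀.card : ℝ) = pairAvg C₀ g := by
  obtain ⟨u, hu, h⟩ := exists_conv hd hC (g₁ := 1) (g₂ := g) (by simpa using hg)
  rw [natDegree_one, Nat.le_zero, natDegree_eq_zero] at hu
  obtain ⟨c, rfl⟩ := hu
  have h' : ∀ y, (∑ z ∈ C₀, g.eval (ip y z)) / (C₀.card : ℝ) = c := fun y => by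
    simpa using h y y
  simp only [pairAvg, h', avg_const hC.1]

lemma ip_neg_left (x y : Sph d) : ip (-x) y = -ip x y := by simp [ip]

lemma pairAvg_symm (hd : 2 ≤ d) (hC : IsSphDesign d M C₀) {g : ℝ[X]} (hg : g.natDegree ≤ M) :
    pairAvg C₀ (g.comp (-X)) = pairAvg C₀ g := by
  obtain ⟨x, -⟩ := hC.1
  rw [← avg_eq_pairAvg hd hC hg (-x),
    ← avg_eq_pairAvg hd hC (by rw [degree_comp_neg_X]; exact hg) x]
  simp [ip_neg_left]

/-- The distance distribution of `C₀`, as a measure on the increasingly ordered inner products. -/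
lemma exists_nodes (hne : C₀.Nonempty) : ∃ w r : ℕ → ℝ,
    IsNodes ((innerProds C₀).ncard + 1) w r ∧ r (innerProds C₀).ncard = 1 ∧
    (∀ t, t ∈ innerProds C₀ ↔ ∃ i < (innerProds C₀).ncard, r i = t) ∧
    ∀ g, pairAvg C₀ g = dI ((innerProds C₀).ncard + 1) w r g := by
  classical
  set T : Finset ℝ := (C₀ ×ˢ C₀).image fun p => ip p.1 p.2 with hT
  have hN : 0 < (C₀.card : ℝ) := by exact_mod_cast hne.card_pos
  have h1T : (1 : ℝ) ∈ T := by
    obtain ⟨x, hx⟩ := hne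
    exact Finset.mem_image.2 ⟨(x, x), by simp [hx], ip_self x⟩
  have hA : innerProds C₀ = ↑(T.erase 1) := by
    ext t
    simp only [innerProds, mem_ofPred_eq, Finset.coe_erase, mem_sdiff, Finset.mem_coe,
      mem_singleton_iff, hT, Finset.mem_image, Finset.mem_product, Prod.exists]
    constructor
    · rintro ⟨x, hx, y, hy, hxy, rfl⟩
      exact ⟨⟨x, y, ⟨hx, hy⟩, rfl⟩, fun h => hxy (ip_eq_one_iff.1 h)⟩
    · rintro ⟨⟨x, y, ⟨hx, hy⟩, rfl⟩, h⟩
      exact ⟨x, hx, y, hy, fun h' => h (ip_eq_one_iff.2 h'), rfl⟩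
  have hcard : T.card = (innerProds C₀).ncard + 1 := by
    rw [hA, ncard_coe_finset, Finset.card_erase_add_one h1T]
  set m := (innerProds C₀).ncard
  set r : ℕ → ℝ := fun i => if h : i < m + 1 then T.orderEmbOfFin hcard ⟨i, h⟩ else 0 with hr
  have hrT : ∀ i < m + 1, r i ∈ T := fun i hi => by
    simp only [hr, hi, dif_pos]; exact Finset.orderEmbOfFin_mem _ _ _
  have hlt : ∀ i j, i < j → j < m + 1 → r i < r j := by
    intro i j hij hj
    simp only [hr, hj, hij.trans hj, dif_pos]
    exact (T.orderEmbOfFin hcard).strictMono hij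
  have hsurj : ∀ t ∈ T, ∃ i < m + 1, r i = t := by
    intro t ht
    have : t ∈ Set.range (T.orderEmbOfFin hcard) := by rw [Finset.range_orderEmbOfFin]; exact ht
    obtain ⟨⟨i, hi⟩, rfl⟩ := this
    exact ⟨i, hi, by simp only [hr, hi, dif_pos]⟩
  have hle : ∀ t ∈ T, t ≤ 1 := by
    intro t ht
    obtain ⟨p, -, rfl⟩ := Finset.mem_image.1 ht
    exact (ip_mem _ _).2
  have hrm : r m = 1 := by
    obtain ⟨j, hj, hj1⟩ := hsurj 1 h1T
    rcases Nat.lt_succ_iff_lt_or_eq.1 hj with h | h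
    · have := hlt j m h (by omega)
      linarith [hle _ (hrT m (by omega))]
    · rw [← h, hj1]
  set w : ℕ → ℝ := fun i => ((C₀ ×ˢ C₀).filter fun p => ip p.1 p.2 = r i).card /
    ((C₀.card : ℝ) * C₀.card) with hw
  have hnodes : IsNodes (m + 1) w r := by
    refine ⟨fun i hi => ?_, hlt⟩
    obtain ⟨p, hp, hpi⟩ := Finset.mem_image.1 (hrT i hi)
    refine div_pos ?_ (mul_pos hN hN)
    exact_mod_cast Finset.card_pos.2 ⟨p, Finset.mem_filter.2 ⟨hp, hpi⟩⟩
  refine ⟨w, r, hnodes, hrm, ?_, ?_⟩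
  · intro t
    rw [hA]
    simp only [Finset.coe_erase, mem_sdiff, Finset.mem_coe, mem_singleton_iff]
    constructor
    · rintro ⟨ht, ht1⟩
      obtain ⟨i, hi, rfl⟩ := hsurj t ht
      refine ⟨i, lt_of_le_of_ne (by omega) ?_, rfl⟩
      rintro rfl
      exact ht1 hrm
    · rintro ⟨i, hi, rfl⟩
      exact ⟨hrT i (by omega), by rw [← hrm]; exact (hlt i m hi (by omega)).ne⟩
  · intro g
    have himg : T = (Finset.range (m + 1)).image r := by
      ext t
      simp only [Finset.mem_image, Finset.mem_range]
      exact ⟨hsurj t, by rintro ⟨i, hi, rfl⟩; exact hrT i hi⟩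
    have hs : ∑ p ∈ C₀ ×ˢ C₀, g.eval (ip p.1 p.2) = ∑ i ∈ Finset.range (m + 1),
        (((C₀ ×ˢ C₀).filter fun p => ip p.1 p.2 = r i).card : ℝ) * g.eval (r i) := by
      have := Finset.sum_comp (s := C₀ ×ˢ C₀) (fun t => g.eval t) (fun p => ip p.1 p.2)
      rw [this, ← hT, himg, Finset.sum_image hnodes.injOn]
      simp
    rw [dI_apply, pairAvg, ← Finset.sum_div, div_div, ← Finset.sum_product', hs, Finset.sum_div]
    refine Finset.sum_congr rfl fun i _ => ?_
    simp only [hw]; ring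

/-- The polynomials `g` for which `g(⟨x, y⟩)` has a feature representation `∑ᵢ φᵢ(x) φᵢ(y)`
with finitely many continuous features; these kernels are positive definite. -/
def PD (d : ℕ) : Set ℝ[X] :=
  {g | ∃ (ι : Type) (_ : Fintype ι) (φ : ι → Sph d → ℝ), (∀ i, Continuous (φ i)) ∧
    ∀ x y, g.eval (ip x y) = ∑ i, φ i x * φ i y}

lemma PD_cone : IsCone (PD d) := by
  refine ⟨⟨Empty, inferInstance, fun i => i.elim, fun i => i.elim, by simp⟩, ?_, ?_⟩
  · rintro g h ⟨ι, _, φ, hφ, hg⟩ ⟨κ, _, ψ, hψ, hh⟩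
    refine ⟨ι ⊕ κ, inferInstance, Sum.elim φ ψ, ?_, ?_⟩
    · rintro (i | i)
      exacts [hφ i, hψ i]
    · intro x y; simp [hg, hh]
  · rintro a g ha ⟨ι, _, φ, hφ, hg⟩
    refine ⟨ι, inferInstance, fun i x => √a * φ i x, fun i => (hφ i).const_mul _, ?_⟩
    intro x y
    rw [eval_smul, hg, smul_eq_mul, Finset.mul_sum]
    refine Finset.sum_congr rfl fun i _ => ?_
    linear_combination (-(φ i x * φ i y)) * Real.mul_self_sqrt ha

lemma PD_mul {g h : ℝ[X]} (hg : g ∈ PD d) (hh : h ∈ PD d) : g * h ∈ PD d := by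
  obtain ⟨ι, _, φ, hφ, hg⟩ := hg
  obtain ⟨κ, _, ψ, hψ, hh⟩ := hh
  refine ⟨ι × κ, inferInstance, fun i x => φ i.1 x * ψ i.2 x,
    fun i => (hφ _).mul (hψ _), fun x y => ?_⟩
  rw [eval_mul, hg, hh, Finset.sum_mul_sum, Fintype.sum_prod_type]
  refine Finset.sum_congr rfl fun i _ => Finset.sum_congr rfl fun j _ => by ring

lemma PD_one : (1 : ℝ[X]) ∈ PD d :=
  ⟨Unit, inferInstance, fun _ _ => 1, fun _ => continuous_const, by simp⟩

lemma PD_X : (X : ℝ[X]) ∈ PD d := by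
  refine ⟨Fin d, inferInstance, fun i x => (x : EuclideanSpace ℝ (Fin d)) i,
    fun i => by fun_prop, fun x y => ?_⟩
  rw [eval_X, ip_eq_sum]

/-- The orthogonal polynomials of the distance distribution reproduce themselves, up to a positive
factor, under convolution over the design, and are therefore positive definite. -/
lemma PD_of_isOP (hd : 2 ≤ d) (hC : IsSphDesign d M C₀) {n : ℕ} {w r : ℕ → ℝ}
    (hn : IsNodes (n + 1) w r) (hr : r n = 1) (hL : ∀ g, pairAvg C₀ g = dI (n + 1) w r g)
    {k : ℕ} (hk : k < n + 1) (hkM : 2 * k ≤ M) {p : ℝ[X]} (hp : IsOP (n + 1) w r k p) :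
    p ∈ PD d := by
  have hN : 0 < (C₀.card : ℝ) := by exact_mod_cast hC.1.card_pos
  obtain ⟨u, hu, hconv⟩ := exists_conv hd hC (g₁ := p) (g₂ := p) (by rw [hp.deg]; omega)
  rw [hp.deg] at hu
  have horth : ∀ q : ℝ[X], q.degree < k → dI (n + 1) w r (u * q) = 0 := by
    intro q hq
    by_cases hq0 : q = 0
    · simp [hq0]
    have hqd : q.natDegree < k := (natDegree_lt_iff_degree_lt hq0).2 hq
    obtain ⟨v, hv, hv'⟩ := exists_conv hd hC (g₁ := q) (g₂ := p) (by rw [hp.deg]; omega)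
    have hvk : v.degree < k := degree_le_natDegree.trans_lt (by exact_mod_cast hv.trans_lt hqd)
    rw [← hp.orth v hvk, ← hL, ← hL]
    simp only [pairAvg, eval_mul, ← hconv, ← hv']
    congr 1
    refine Finset.sum_congr rfl fun x _ => ?_
    congr 1
    simp only [Finset.sum_div, Finset.sum_mul, Finset.mul_sum]
    rw [Finset.sum_comm]
    refine Finset.sum_congr rfl fun z _ => Finset.sum_congr rfl fun y _ => ?_
    rw [ip_comm y z]; ring
  have hup : u = u.coeff k • p := by
    have hdeg := degree_sub_smul_lt hp.monic hp.deg
      (degree_le_natDegree.trans_lt (by exact_mod_cast Nat.lt_succ_of_le hu))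
    have := hn.eq_zero (hdeg.trans (by exact_mod_cast hk)) (by
      rw [sub_mul, map_sub, horth _ hdeg, smul_mul_assoc, map_smul, hp.orth _ hdeg]; simp)
    exact sub_eq_zero.1 this
  have hu1 : u.eval 1 = dI (n + 1) w r (p * p) := by
    rw [← hL]
    simp only [pairAvg, eval_mul, hconv, ip_self, avg_const hC.1]
  have hpos := IsOP.pos hn hp hk
  have hp1 := IsOP.eval_top_pos hn hk hp
  rw [hr] at hp1
  have hc : 0 < u.coeff k := by
    have hmul : u.eval 1 = u.coeff k * p.eval 1 := by
      conv_lhs => rw [hup]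
      rw [eval_smul, smul_eq_mul]
    rw [← hu1, hmul] at hpos
    exact pos_of_mul_pos_left hpos hp1.le
  have hu2 : u ∈ PD d := by
    refine ⟨C₀, inferInstance, fun z x => p.eval (ip x z) / √(C₀.card : ℝ), fun z => ?_,
      fun x y => ?_⟩
    · unfold ip; fun_prop
    · rw [← hconv, Finset.sum_div, ← Finset.sum_coe_sort C₀]
      refine Finset.sum_congr rfl fun z _ => ?_
      rw [div_mul_div_comm, Real.mul_self_sqrt hN.le]
  have : p = (u.coeff k)⁻¹ • u := by
    rw [eq_inv_smul_iff₀ hc.ne', ← hup]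
  rw [this]
  exact PD_cone.smul (by positivity) hu2
end

/-! ### Interpolation nodes of a tight design -/

noncomputable section
open MeasureTheory Metric Set Polynomial
open scoped RealInnerProductSpace
variable {d M : ℕ} {C₀ : Finset (Sph d)}

lemma exists_ip_eq (hd : 2 ≤ d) (z : Sph d) {t : ℝ} (ht : t ∈ Icc (-1 : ℝ) 1) :
    ∃ x : Sph d, ip x z = t := by
  have hrank : 1 < Module.rank ℝ (EuclideanSpace ℝ (Fin d)) := by
    rw [← Module.finrank_eq_rank, finrank_euclideanSpace_fin]; exact_mod_cast hd
  have : PreconnectedSpace (Sph d) :=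
    Subtype.preconnectedSpace (isPreconnected_sphere hrank 0 1)
  have hc : Continuous fun x : Sph d => ip x z := by unfold ip; fun_prop
  have := mem_range_of_exists_le_of_exists_ge hc (c := t)
    ⟨-z, by rw [ip_neg_left, ip_self]; exact ht.1⟩ ⟨z, by rw [ip_self]; exact ht.2⟩
  exact this

/-- A tight design of even strength contains no antipodal points. -/
lemma neg_one_notMem (hd : 2 ≤ d) (hC : IsSphDesign d M C₀) (hfin : (innerProds C₀).Finite)
    (hM : M = 2 * (innerProds C₀).ncard) : (-1 : ℝ) ∉ innerProds C₀ := by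
  intro hmem
  set A : Finset ℝ := hfin.toFinset with hA
  have hAc : A.card = (innerProds C₀).ncard := (ncard_eq_toFinset_card _ hfin).symm
  have hmA : (-1 : ℝ) ∈ A := by simpa [hA] using hmem
  -- The zonal average of `g ≥ 0` vanishes, although `g` is positive somewhere on `(-1, 1)`.
  set q : ℝ[X] := ∏ s ∈ A.erase (-1), (X - C s) with hq
  set g : ℝ[X] := (1 - X ^ 2) * (q * q) with hg
  have hqd : q.natDegree = A.card - 1 := by
    rw [hq, natDegree_prod_of_monic _ _ fun _ _ => monic_X_sub_C _]
    simp [Finset.card_erase_of_mem hmA]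
  have hgd : g.natDegree ≤ M := by
    refine natDegree_mul_le.trans ?_
    have h1 : (1 - X ^ 2 : ℝ[X]).natDegree ≤ 2 := by compute_degree
    have h2 : (q * q).natDegree ≤ _ := natDegree_mul_le
    have := Finset.card_pos.2 ⟨_, hmA⟩
    omega
  have hge : ∀ t, g.eval t = (1 - t ^ 2) * (q.eval t * q.eval t) := fun t => by simp [hg]
  have hL : pairAvg C₀ g = 0 := by
    have : ∀ x ∈ C₀, ∀ y ∈ C₀, g.eval (ip x y) = 0 := by
      intro x hx y hy
      rw [hge]
      by_cases hxy : x = y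
      · rw [hxy, ip_self]; ring
      · by_cases h1 : ip x y = -1
        · rw [h1]; ring
        · have : q.eval (ip x y) = 0 := by
            refine prod_X_sub_C_eval_eq ?_
            rw [Finset.mem_erase]
            refine ⟨h1, ?_⟩
            simp only [hA, Finite.mem_toFinset]
            exact ⟨x, hx, y, hy, hxy, rfl⟩
          rw [this]; ring
    rw [pairAvg, Finset.sum_eq_zero, zero_div]
    intro x hx
    rw [Finset.sum_eq_zero (this x hx), zero_div]
  obtain ⟨z, hz⟩ := hC.1
  obtain ⟨t, ht, htA⟩ := ((Ioo_infinite (show (-1 : ℝ) < 1 by norm_num)).sdiff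
    A.finite_toSet).nonempty
  obtain ⟨x, rfl⟩ := exists_ip_eq hd z (Ioo_subset_Icc_self ht)
  have h0 := avg_eq_pairAvg hd hC hgd x
  have hN : (C₀.card : ℝ) ≠ 0 := by simpa using (Finset.card_pos.2 ⟨z, hz⟩).ne'
  rw [hL, div_eq_zero_iff, or_iff_left hN, Finset.sum_eq_zero_iff_of_nonneg] at h0
  · have h1 := h0 z hz
    rw [hge] at h1
    have hq0 : q.eval (ip x z) ≠ 0 := prod_X_sub_C_eval_ne fun h => htA (Finset.mem_of_mem_erase h)
    have : 0 < 1 - ip x z ^ 2 := by nlinarith [ht.1, ht.2]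
    exact (mul_pos this (mul_self_pos.2 hq0)).ne' h1
  · intro y _
    rw [hge]
    have := ip_mem x y
    exact mul_nonneg (by nlinarith [this.1, this.2]) (mul_self_nonneg _)

/-- The inner products of a tight design are interpolation nodes (a possible node `-1` is simple,
the others are interior and double) whose partial nodal polynomials are positive definite. -/
lemma exists_chain_data (hd : 2 ≤ d) (hM : 1 ≤ M) (hC : IsTightSphDesign d M C₀) :
    ∃ (B : Finset ℝ) (l : ℕ) (r : ℕ → ℝ), (B = ∅ ∨ B = {-1}) ∧
      (∀ i < l, r i ∈ Ioo (-1 : ℝ) 1) ∧ InjOn r (Finset.range l) ∧ B.card + 2 * l = M ∧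
      (∀ j ≤ l, (∏ s ∈ B, (X - C s)) * ((∏ i ∈ Finset.range j, (X - C (r i))) *
        ∏ i ∈ Finset.range j, (X - C (r i))) ∈ PD d) ∧
      (∀ j < l, (∏ s ∈ B, (X - C s)) * ((∏ i ∈ Finset.range (j + 1), (X - C (r i))) *
        ∏ i ∈ Finset.range j, (X - C (r i))) ∈ PD d) ∧
      innerProds C₀ = ↑(B ∪ (Finset.range l).image r) := by
  obtain ⟨hC, hT⟩ := hC
  obtain ⟨w, r, hn, hrm, hA, hL⟩ := exists_nodes hC.1
  have hIcc : ∀ i < (innerProds C₀).ncard, r i ∈ Icc (-1 : ℝ) 1 := by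
    intro i hi
    obtain ⟨x, -, y, -, -, h⟩ := (hA _).2 ⟨i, hi, rfl⟩
    rw [← h]; exact ip_mem x y
  have hlt1 : ∀ i < (innerProds C₀).ncard, r i < 1 := fun i hi => by
    rw [← hrm]; exact hn.lt i _ hi (by omega)
  rcases hT with ⟨m, hm, hcard⟩ | ⟨m, hm, hcard, hneg⟩
  · have hfin : (innerProds C₀).Finite := finite_of_ncard_pos (by omega)
    have hneg := neg_one_notMem hd hC hfin (by omega)
    rw [hcard] at hn hrm hIcc hlt1
    simp only [hcard] at hA hL
    have hG : ∀ j ≤ m, ∏ i ∈ Finset.range j, (X - C (r i)) ∈ PD d := fun j hj =>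
      prod_mem_cone PD_cone hn (fun k hk p hp => PD_of_isOP hd hC hn hrm hL hk (by omega) hp) j
        (by omega)
    refine ⟨∅, m, r, Or.inl rfl, ?_, ?_, by simp [hm], ?_, ?_, ?_⟩
    · intro i hi
      refine ⟨lt_of_le_of_ne (hIcc i hi).1 fun h => hneg ?_, hlt1 i hi⟩
      rw [h]; exact (hA _).2 ⟨i, hi, rfl⟩
    · exact hn.injOn.mono (by simp)
    · intro j hj; simpa using PD_mul (hG j hj) (hG j hj)
    · intro j hj
      rw [Finset.prod_empty, one_mul]
      exact PD_mul (hG (j + 1) hj) (hG j hj.le)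
    · ext t; rw [hA]; simp
  · obtain ⟨l, rfl⟩ : ∃ l, m = l + 1 := ⟨m - 1, by omega⟩
    rw [hcard] at hn hrm hIcc hlt1
    simp only [hcard] at hA hL
    have h0 : r 0 = -1 := by
      obtain ⟨i, hi, hi1⟩ := (hA _).1 hneg
      rcases Nat.eq_zero_or_pos i with rfl | hpos
      · exact hi1
      · have := hn.lt 0 i hpos (by omega)
        linarith [(hIcc 0 (by omega)).1]
    have hintegral : ∀ i < l, r (i + 1) ∈ Ioo (-1 : ℝ) 1 := fun i hi => by
      refine ⟨?_, hlt1 _ (by omega)⟩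
      rw [← h0]; exact hn.lt 0 _ (by omega) (by omega)
    have hn' : IsNodes l (fun i => w (i + 1) * (1 - r (i + 1) ^ 2)) (fun i => r (i + 1)) := by
      refine ⟨fun i hi => mul_pos (hn.pos _ (by omega)) ?_,
        fun i j hij hj => hn.lt _ _ (by omega) (by omega)⟩
      have := hintegral i hi
      nlinarith [this.1, this.2]
    have hOP : ∀ k ≤ l, ∀ p, IsOP l (fun i => w (i + 1) * (1 - r (i + 1) ^ 2))
        (fun i => r (i + 1)) k p → p ∈ PD d := fun k hk p hp =>
      IsOP.transfer_symm hn PD_cone h0 hrm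
        (fun g hg => by rw [← hL, ← hL]; exact pairAvg_symm hd hC (by omega))
        (fun j hj p hp => PD_of_isOP hd hC hn hrm hL (by omega) (by omega) hp) hk hp hn'
    have hG : ∀ j ≤ l, ∏ i ∈ Finset.range j, (X - C (r (i + 1))) ∈ PD d := by
      intro j hj
      rcases hj.eq_or_lt with rfl | hj
      · refine hOP j le_rfl _ ⟨monic_prod_of_monic _ _ fun _ _ => monic_X_sub_C _, ?_, ?_⟩
        · rw [natDegree_prod_of_monic _ _ fun _ _ => monic_X_sub_C _]; simp
        · intro q _
          rw [dI_apply]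
          refine Finset.sum_eq_zero fun i hi => ?_
          rw [eval_mul, eval_prod, Finset.prod_eq_zero hi (by simp)]; ring
      · exact prod_mem_cone PD_cone hn' (fun k hk p hp => hOP k hk.le p hp) j hj
    have hB : ∏ s ∈ ({-1} : Finset ℝ), (X - C s) ∈ PD d := by
      have : ∏ s ∈ ({-1} : Finset ℝ), (X - C s) = X + 1 := by simp
      rw [this]; exact PD_cone.add PD_X PD_one
    refine ⟨{-1}, l, fun i => r (i + 1), Or.inr rfl, hintegral, hn'.injOn, by simp; omega, ?_, ?_, ?_⟩
    · intro j hj; exact PD_mul hB (PD_mul (hG j hj) (hG j hj))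
    · intro j hj; exact PD_mul hB (PD_mul (hG (j + 1) hj) (hG j hj.le))
    · ext t
      rw [hA]
      simp only [Finset.coe_union, Finset.coe_singleton, Finset.coe_image, Finset.coe_range,
        mem_union, mem_singleton_iff, mem_image, mem_Iio]
      constructor
      · rintro ⟨i, hi, rfl⟩
        rcases i with _ | i
        · exact Or.inl h0
        · exact Or.inr ⟨i, by omega, rfl⟩
      · rintro (rfl | ⟨i, hi, rfl⟩)
        · exact ⟨0, by omega, h0⟩
        · exact ⟨i + 1, by omega, rfl⟩
end

/-! ### Comparison of energies and of moments -/

noncomputable section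
open MeasureTheory Metric Set Polynomial
open scoped RealInnerProductSpace
variable {d M : ℕ} {C₀ : Finset (Sph d)} {μ : Measure (Sph d)} [IsProbabilityMeasure μ]

lemma integrable_of_cont {α : Type*} [TopologicalSpace α] [CompactSpace α] [MeasurableSpace α]
    [OpensMeasurableSpace α] {ν : Measure α} [IsFiniteMeasure ν] {φ : α → ℝ} (hφ : Continuous φ) :
    Integrable φ ν :=
  hφ.integrable_of_hasCompactSupport (HasCompactSupport.of_compactSpace φ)

lemma continuous_eval_ip (g : ℝ[X]) : Continuous fun p : Sph d × Sph d => g.eval (ip p.1 p.2) :=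
  g.continuous.comp continuous_ip

lemma pairAvg_add (g h : ℝ[X]) : pairAvg C₀ (g + h) = pairAvg C₀ g + pairAvg C₀ h := by
  simp only [pairAvg, eval_add, Finset.sum_add_distrib, add_div]

lemma pairAvg_smul (a : ℝ) (g : ℝ[X]) : pairAvg C₀ (a • g) = a * pairAvg C₀ g := by
  simp only [pairAvg, eval_smul, smul_eq_mul, ← Finset.mul_sum, mul_div_assoc]

/-- The difference of the energies of `μ` and of the uniform measure on `C₀`, for a polynomial
potential. -/
def dev (μ : Measure (Sph d)) [IsProbabilityMeasure μ] (C₀ : Finset (Sph d)) : ℝ[X] →ₗ[ℝ] ℝ where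
  toFun g := ∫ p, g.eval (ip p.1 p.2) ∂(μ.prod μ) - pairAvg C₀ g
  map_add' g h := by
    simp only [eval_add, pairAvg_add]
    rw [integral_add (integrable_of_cont (continuous_eval_ip g))
      (integrable_of_cont (continuous_eval_ip h))]
    ring
  map_smul' a g := by
    simp only [eval_smul, pairAvg_smul, smul_eq_mul, RingHom.id_apply]
    rw [integral_const_mul]; ring

lemma dev_apply (g : ℝ[X]) :
    dev μ C₀ g = ∫ p, g.eval (ip p.1 p.2) ∂(μ.prod μ) - pairAvg C₀ g := rfl

/-- For a kernel with features `φᵢ`, the design property completes the square. -/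
lemma dev_eq_sum_sq (hd : 2 ≤ d) (hC : IsSphDesign d M C₀) {g : ℝ[X]} (hg : g.natDegree ≤ M)
    {ι : Type} [Fintype ι] {φ : ι → Sph d → ℝ} (hφ : ∀ i, Continuous (φ i))
    (h : ∀ x y, g.eval (ip x y) = ∑ i, φ i x * φ i y) :
    dev μ C₀ g = ∑ i, (∫ x, φ i x ∂μ - (∑ z ∈ C₀, φ i z) / (C₀.card : ℝ)) ^ 2 := by
  have h1 : ∫ p, g.eval (ip p.1 p.2) ∂(μ.prod μ) = ∑ i, (∫ x, φ i x ∂μ) * ∫ x, φ i x ∂μ := by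
    simp only [h]
    rw [integral_finsetSum _ fun i _ => integrable_of_cont (by have := hφ i; fun_prop)]
    exact Finset.sum_congr rfl fun i _ => integral_prod_mul _ _
  have h2 : ∀ x, ∑ i, φ i x * ((∑ z ∈ C₀, φ i z) / (C₀.card : ℝ)) = pairAvg C₀ g := by
    intro x
    rw [← avg_eq_pairAvg hd hC hg x]
    simp only [h]
    rw [Finset.sum_comm, Finset.sum_div]
    refine Finset.sum_congr rfl fun i _ => ?_
    rw [← Finset.mul_sum, mul_div_assoc]
  have h3 : ∑ i, (∫ x, φ i x ∂μ) * ((∑ z ∈ C₀, φ i z) / (C₀.card : ℝ)) = pairAvg C₀ g := by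
    have : ∫ x, ∑ i, φ i x * ((∑ z ∈ C₀, φ i z) / (C₀.card : ℝ)) ∂μ = pairAvg C₀ g := by
      simp [h2]
    rw [← this, integral_finsetSum _ fun i _ => (integrable_of_cont (hφ i)).mul_const _]
    exact Finset.sum_congr rfl fun i _ => (integral_mul_const _ _).symm
  have h4 : ∑ i, ((∑ z ∈ C₀, φ i z) / (C₀.card : ℝ)) * ((∑ z ∈ C₀, φ i z) / (C₀.card : ℝ))
      = pairAvg C₀ g := by
    rw [← avg_const hC.1 (pairAvg C₀ g), Finset.sum_congr rfl fun x _ => (h2 x).symm,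
      Finset.sum_comm, Finset.sum_div]
    refine Finset.sum_congr rfl fun i _ => ?_
    rw [← Finset.sum_mul]; ring
  have h5 : ∑ i, (∫ x, φ i x ∂μ - (∑ z ∈ C₀, φ i z) / (C₀.card : ℝ)) ^ 2
      = ∑ i, (∫ x, φ i x ∂μ) * (∫ x, φ i x ∂μ)
        - 2 * ∑ i, (∫ x, φ i x ∂μ) * ((∑ z ∈ C₀, φ i z) / (C₀.card : ℝ))
        + ∑ i, ((∑ z ∈ C₀, φ i z) / (C₀.card : ℝ)) * ((∑ z ∈ C₀, φ i z) / (C₀.card : ℝ)) := by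
    rw [Finset.mul_sum, ← Finset.sum_sub_distrib, ← Finset.sum_add_distrib]
    exact Finset.sum_congr rfl fun i _ => by ring
  rw [h5, ← h1, h3, h4, dev_apply]; ring

lemma dev_nonneg (hd : 2 ≤ d) (hC : IsSphDesign d M C₀) {g : ℝ[X]} (hg : g.natDegree ≤ M)
    (hPD : g ∈ PD d) : 0 ≤ dev μ C₀ g := by
  obtain ⟨ι, _, φ, hφ, h⟩ := hPD
  rw [dev_eq_sum_sq hd hC hg hφ h]
  positivity

lemma dev_one (hne : C₀.Nonempty) : dev μ C₀ 1 = 0 := by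
  rw [dev_apply]; simp [pairAvg, avg_const hne, -Finset.sum_const]

/-- One step of the Newton expansion preserves the sign of the energy difference and, in the
equality case, yields the energy of one more monomial. -/
lemma dev_step (hd : 2 ≤ d) (hC : IsSphDesign d M C₀) (k : ℕ) (h : ℝ[X]) (a : ℝ) (N : ℝ[X])
    (hk : k ≤ M) (hN : N.Monic) (hNk : N.natDegree = k) (hPD : N ∈ PD d) (ha : 1 ≤ k → 0 < a)
    (hQ : 0 ≤ dev μ C₀ h ∧ (dev μ C₀ h = 0 → ∀ j < k, dev μ C₀ (X ^ j) = 0)) :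
    0 ≤ dev μ C₀ (h + a • N) ∧
      (dev μ C₀ (h + a • N) = 0 → ∀ j < k + 1, dev μ C₀ (X ^ j) = 0) := by
  rw [map_add, map_smul, smul_eq_mul]
  rcases Nat.eq_zero_or_pos k with rfl | hpos
  · rw [hN.natDegree_eq_zero.1 hNk, dev_one hC.1, mul_zero, add_zero]
    refine ⟨hQ.1, fun _ j hj => ?_⟩
    obtain rfl : j = 0 := by omega
    rw [pow_zero, dev_one hC.1]
  · have ha := ha hpos
    have hN0 := dev_nonneg (μ := μ) hd hC (hNk.le.trans hk) hPD
    refine ⟨add_nonneg hQ.1 (mul_nonneg ha.le hN0), fun h0 => ?_⟩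
    have h1 : dev μ C₀ h = 0 := by nlinarith [hQ.1, mul_nonneg ha.le hN0]
    have h2 : dev μ C₀ N = 0 := by
      rw [h1, zero_add, mul_eq_zero] at h0
      exact h0.resolve_left ha.ne'
    intro j hj
    rcases Nat.lt_succ_iff_lt_or_eq.1 hj with hj | rfl
    · exact hQ.2 h1 j hj
    · rw [hN.as_sum, map_add, map_sum, hNk, Finset.sum_eq_zero, add_zero] at h2
      · exact h2
      · intro i hi
        rw [← smul_eq_C_mul, map_smul, hQ.2 h1 i (by simpa using hi), smul_zero]

/-- A monomial is a product of coordinates over a word in the variables. -/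
lemma exists_word (s : Fin d →₀ ℕ) : ∃ v : Fin (s.sum fun _ e => e) → Fin d,
    ∀ x : Fin d → ℝ, ∏ i, x i ^ s i = ∏ j, x (v j) := by
  have hlen : s.toMultiset.toList.length = s.sum fun _ e => e := by
    rw [Multiset.length_toList, Finsupp.card_toMultiset]; rfl
  rw [← hlen]
  refine ⟨fun j => s.toMultiset.toList.get j, fun x => ?_⟩
  have h1 : (s.toMultiset.map x).prod = ∏ i, x i ^ s i := by
    rw [Finsupp.toMultiset_map, Finsupp.prod_toMultiset, Finsupp.prod_mapDomain_index
      (by simp) (fun _ _ _ => pow_add _ _ _), Finsupp.prod_fintype _ _ (by simp)]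
  rw [← h1]
  conv_lhs => rw [← Multiset.coe_toList s.toMultiset]
  rw [Multiset.map_coe, Multiset.prod_coe]
  simp [← Fin.prod_univ_getElem]

/-- If the energies of all monomial potentials up to degree `M` agree, so do all moments. -/
lemma integral_evalPt (hd : 2 ≤ d) (hC : IsSphDesign d M C₀)
    (h0 : ∀ j < M + 1, dev μ C₀ (X ^ j) = 0) (P : MvPolynomial (Fin d) ℝ)
    (hP : P.totalDegree ≤ M) :
    ∫ x, evalPt P x ∂μ = (∑ x ∈ C₀, evalPt P x) / (C₀.card : ℝ) := by
  have hcoord : ∀ i, Continuous fun x : Sph d => (x : EuclideanSpace ℝ (Fin d)) i := fun i => by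
    fun_prop
  have hword : ∀ k ≤ M, ∀ v : Fin k → Fin d,
      ∫ x : Sph d, ∏ j, (x : EuclideanSpace ℝ (Fin d)) (v j) ∂μ
        = (∑ x ∈ C₀, ∏ j, (x : EuclideanSpace ℝ (Fin d)) (v j)) / (C₀.card : ℝ) := by
    intro k hk v
    have h1 := h0 k (by omega)
    rw [dev_eq_sum_sq hd hC (by simpa using hk) (ι := Fin k → Fin d)
      (φ := fun v x => ∏ j, (x : EuclideanSpace ℝ (Fin d)) (v j))
      (fun v => continuous_finsetProd _ fun j _ => hcoord _)
      (fun x y => by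
        rw [eval_pow, eval_X, ip_eq_sum, Fintype.sum_pow]
        exact Finset.sum_congr rfl fun v _ => Finset.prod_mul_distrib),
      Finset.sum_eq_zero_iff_of_nonneg (fun _ _ => sq_nonneg _)] at h1
    exact sub_eq_zero.1 (pow_eq_zero_iff two_ne_zero |>.1 (h1 v (Finset.mem_univ _)))
  have hev : ∀ x : Sph d, evalPt P x = ∑ s ∈ P.support,
      P.coeff s * ∏ i, (x : EuclideanSpace ℝ (Fin d)) i ^ s i := fun x =>
    MvPolynomial.eval_eq' _ _
  simp only [hev]
  rw [integral_finsetSum _ fun s _ => (integrable_of_cont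
    (by fun_prop)).const_mul _, Finset.sum_comm,
    Finset.sum_div]
  refine Finset.sum_congr rfl fun s hs => ?_
  rw [integral_const_mul, ← Finset.mul_sum, mul_div_assoc]
  congr 1
  obtain ⟨v, hv⟩ := exists_word s
  simp only [hv]
  exact hword _ ((MvPolynomial.le_totalDegree hs).trans hP) v
end

/-! ### The equality case -/

noncomputable section
open MeasureTheory Metric Set Polynomial
open scoped RealInnerProductSpace
variable {d M : ℕ} {C₀ : Finset (Sph d)} {μ : Measure (Sph d)} [IsProbabilityMeasure μ]

lemma isProbabilityMeasure_unifOn (hne : C₀.Nonempty) : IsProbabilityMeasure (unifOn C₀) := by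
  refine ⟨?_⟩
  have h : (C₀.card : ENNReal) ≠ 0 := by simpa using hne.ne_empty
  simp [unifOn, ENNReal.inv_mul_cancel h (ENNReal.natCast_ne_top _)]

lemma integral_unifOn (C₀ : Finset (Sph d)) (φ : Sph d → ℝ) :
    ∫ x, φ x ∂(unifOn C₀) = (∑ x ∈ C₀, φ x) / (C₀.card : ℝ) := by
  rw [unifOn, integral_smul_measure, integral_finsetSum_measure]
  · simp [div_eq_inv_mul]
  · intro x _
    exact integrable_dirac (by simp)

lemma continuous_f_ip {f : ℝ → ℝ} (hfc : ContinuousOn f (Icc (-1) 1)) :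
    Continuous fun p : Sph d × Sph d => f (ip p.1 p.2) :=
  hfc.comp_continuous continuous_ip fun _ => ip_mem _ _

lemma energy_eq {f : ℝ → ℝ} (hfc : ContinuousOn f (Icc (-1) 1)) :
    energy f μ = ∫ p, f (ip p.1 p.2) ∂(μ.prod μ) :=
  (integral_prod _ (integrable_of_cont (continuous_f_ip hfc))).symm

lemma measure_compl_msupport : μ (msupport μ)ᶜ = 0 := by
  have h : msupport μ = μ.support := by
    ext x
    rw [Measure.support_eq_forall_isOpen]
    exact ⟨fun h U hx hU => h U hU hx, fun h U hU hx => h U hx hU⟩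
  rw [h]
  exact Measure.support_mem_ae

/-- If a nonnegative continuous function has vanishing integral, it vanishes on all
pairs of points of the support. -/
lemma eq_zero_on_msupport {φ : Sph d × Sph d → ℝ} (hφ : Continuous φ) (h0 : ∀ p, 0 ≤ φ p)
    (hintegral : ∫ p, φ p ∂(μ.prod μ) = 0) {x y : Sph d} (hx : x ∈ msupport μ) (hy : y ∈ msupport μ) :
    φ (x, y) = 0 := by
  rw [integral_eq_zero_iff_of_nonneg h0 (integrable_of_cont hφ)] at hintegral
  by_contra hne
  have hopen : IsOpen {p | φ p ≠ 0} := isOpen_ne_fun hφ continuous_const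
  obtain ⟨U, V, hU, hV, hxU, hyV, hUV⟩ := isOpen_prod_iff.1 hopen x y hne
  have hpos : 0 < (μ.prod μ) (U ×ˢ V) := by
    rw [Measure.prod_prod]
    exact ENNReal.mul_pos (hx U hU hxU).ne' (hy V hV hyV).ne'
  exact (hpos.trans_le (measure_mono hUV)).ne' hintegral

/-- A minimizer shares the moments of `C₀` up to degree `M`, and its inner products lie among
those of `C₀`: the linear programming bound is attained. -/
lemma minimizer_moments (hd : 2 ≤ d) (hM : 1 ≤ M) {f : ℝ → ℝ}
    (hfc : ContinuousOn f (Icc (-1) 1))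
    (hF : DerivSeq M (fun k => iteratedDerivWithin k f (Ioo (-1) 1)))
    (hC : IsTightSphDesign d M C₀) (hmin : energy f μ ≤ energy f (unifOn C₀)) :
    (∀ j < M + 1, dev μ C₀ (X ^ j) = 0) ∧
      ∀ x ∈ msupport μ, ∀ y ∈ msupport μ, x ≠ y → ip x y ∈ innerProds C₀ := by
  obtain ⟨B, l, r, hB, hr, hinj, hBl, hD1, hD2, hA⟩ := exists_chain_data hd hM hC
  obtain ⟨h, hh, hQ0, hQ⟩ := hermite_chain hF (D := PD d)
    (Q := fun k h => 0 ≤ dev μ C₀ h ∧ (dev μ C₀ h = 0 → ∀ j < k, dev μ C₀ (X ^ j) = 0))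
    (by simp) (dev_step hd hC.1) hB hr hinj hBl PD_one hD1 hD2
  have hBI : ∀ z ∈ B, z = -1 := by
    rcases hB with rfl | rfl <;> simp
  set R := (Finset.range l).image r with hR
  have hRI : ∀ z ∈ R, z ∈ Ioo (-1 : ℝ) 1 := by
    intro z hz
    obtain ⟨i, hi, rfl⟩ := Finset.mem_image.1 hz
    exact hr i (by simpa using hi)
  have hdisj : Disjoint B R := Finset.disjoint_left.2 fun z hz hz' => by
    have := (hRI z hz').1
    rw [hBI z hz] at this
    exact lt_irrefl _ this
  have h1 : (1 : ℝ) ∉ B ∪ R := by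
    rw [Finset.mem_union]
    rintro (h | h)
    · have := hBI _ h; norm_num at this
    · exact lt_irrefl _ (hRI _ h).2
  have hcard : (insert 1 (B ∪ R)).card + R.card = M + 1 := by
    rw [Finset.card_insert_of_notMem h1, Finset.card_union_of_disjoint hdisj, hR,
      Finset.card_image_of_injOn hinj, Finset.card_range]
    omega
  have hlt : ∀ t ∈ Icc (-1 : ℝ) 1, t ∉ insert 1 (B ∪ R) → h.eval t < f t := by
    intro t ht htS
    have := hh.lt_of_nodal_neg hF hcard ht htS (nodal_neg hB hdisj h1 ht htS)
    simpa using this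
  have heq : ∀ t ∈ insert 1 (B ∪ R), h.eval t = f t := by
    intro t ht
    have := hh.val t ht
    simpa using this
  have hle : ∀ t ∈ Icc (-1 : ℝ) 1, h.eval t ≤ f t := by
    intro t ht
    by_cases htS : t ∈ insert 1 (B ∪ R)
    · exact (heq t htS).le
    · exact (hlt t ht htS).le
  have hunif : energy f (unifOn C₀) = pairAvg C₀ h := by
    rw [energy, integral_unifOn]
    simp only [integral_unifOn]
    rw [pairAvg]
    congr 1
    refine Finset.sum_congr rfl fun x hx => ?_
    congr 1
    refine Finset.sum_congr rfl fun y hy => ?_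
    refine (heq (ip x y) ?_).symm
    rw [Finset.mem_insert]
    by_cases hxy : x = y
    · exact Or.inl (ip_eq_one_iff.2 hxy)
    · right
      rw [← Finset.mem_coe, ← hA]
      exact ⟨x, hx, y, hy, hxy, rfl⟩
  have hcf := continuous_f_ip (d := d) hfc
  have hch := continuous_eval_ip (d := d) h
  have hsub : ∫ p, (f (ip p.1 p.2) - h.eval (ip p.1 p.2)) ∂(μ.prod μ)
      = energy f μ - ∫ p, h.eval (ip p.1 p.2) ∂(μ.prod μ) := by
    rw [integral_sub (integrable_of_cont hcf) (integrable_of_cont hch), energy_eq hfc]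
  have hnn : ∀ p : Sph d × Sph d, 0 ≤ f (ip p.1 p.2) - h.eval (ip p.1 p.2) := fun p =>
    sub_nonneg.2 (hle _ (ip_mem _ _))
  have hint0 : 0 ≤ ∫ p, (f (ip p.1 p.2) - h.eval (ip p.1 p.2)) ∂(μ.prod μ) :=
    integral_nonneg hnn
  have hdev := dev_apply (μ := μ) (C₀ := C₀) h
  refine ⟨hQ (by linarith), fun x hx y hy hxy => ?_⟩
  have hz : f (ip x y) - h.eval (ip x y) = 0 := eq_zero_on_msupport
    (φ := fun p => f (ip p.1 p.2) - h.eval (ip p.1 p.2)) (hcf.sub hch) hnn (by linarith) hx hy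
  by_contra hn
  have : ip x y ∉ insert 1 (B ∪ R) := by
    rw [Finset.mem_insert, not_or]
    refine ⟨fun h => hxy (ip_eq_one_iff.1 h), ?_⟩
    rwa [← Finset.mem_coe, ← hA]
  have := hlt _ (ip_mem x y) this
  linarith

/-- Equality of moments, applied to zonal polynomials. -/
lemma integral_zonal (hd : 2 ≤ d) (hC : IsSphDesign d M C₀)
    (h0 : ∀ j < M + 1, dev μ C₀ (X ^ j) = 0) {g : ℝ[X]} (hg : g.natDegree ≤ M) (x : Sph d) :
    ∫ y, g.eval (ip x y) ∂μ = pairAvg C₀ g := by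
  have := integral_evalPt hd hC h0 (aeval (lin x) g) ((totalDegree_aeval_lin g x).trans hg)
  simp only [evalPt_aeval_lin] at this
  rw [this, avg_eq_pairAvg hd hC hg]

/-- Each point of the support carries the mass `1/|C₀|`, by testing against the annihilator
of the inner products. -/
lemma measure_singleton (hd : 2 ≤ d) (hC : IsSphDesign d M C₀)
    (h0 : ∀ j < M + 1, dev μ C₀ (X ^ j) = 0) {A : Finset ℝ} (hA : innerProds C₀ = ↑A)
    (hAM : A.card ≤ M)
    (hS : ∀ x ∈ msupport μ, ∀ y ∈ msupport μ, x ≠ y → ip x y ∈ innerProds C₀) {x : Sph d}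
    (hx : x ∈ msupport μ) : μ.real {x} = 1 / (C₀.card : ℝ) := by
  classical
  set q : ℝ[X] := ∏ s ∈ A, (X - C s) with hq
  have hqd : q.natDegree ≤ M := by
    rw [hq, natDegree_prod_of_monic _ _ fun _ _ => monic_X_sub_C _]; simpa using hAM
  have hq1 : q.eval 1 ≠ 0 := by
    refine prod_X_sub_C_eval_ne fun h => ?_
    rw [← Finset.mem_coe, ← hA] at h
    obtain ⟨a, -, b, -, hab, h⟩ := h
    exact hab (ip_eq_one_iff.1 h)
  have hq0 : ∀ t ∈ innerProds C₀, q.eval t = 0 := fun t ht =>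
    prod_X_sub_C_eval_eq (by rwa [hA, Finset.mem_coe] at ht)
  have h1 : ∫ y, q.eval (ip x y) ∂μ = μ.real {x} * q.eval 1 := by
    have hae : (fun y => q.eval (ip x y)) =ᵐ[μ] ({x} : Set (Sph d)).indicator fun _ => q.eval 1 := by
      have : ∀ᵐ y ∂μ, y ∈ msupport μ := measure_compl_msupport
      filter_upwards [this] with y hy
      by_cases hxy : y = x
      · simp [hxy, ip_self]
      · rw [indicator_of_notMem (by simpa using hxy)]
        exact hq0 _ (hS x hx y hy (Ne.symm hxy))
    rw [integral_congr_ae hae, integral_indicator_const _ (measurableSet_singleton x), smul_eq_mul]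
  obtain ⟨z, hz⟩ := hC.1
  have h2 : pairAvg C₀ q = q.eval 1 / (C₀.card : ℝ) := by
    rw [← avg_eq_pairAvg hd hC hqd z, Finset.sum_eq_single_of_mem z hz, ip_self]
    intro y hy hyz
    exact hq0 _ ⟨z, hz, y, hy, Ne.symm hyz, rfl⟩
  rw [integral_zonal hd hC h0 hqd, h2] at h1
  field_simp at h1
  exact h1.symm

/-- A measure with the moments of a tight design, uniform on a finite set with no new inner
products, realizes all of the inner products. -/
lemma innerProds_subset (hd : 2 ≤ d) (hC : IsSphDesign d M C₀)
    (h0 : ∀ j < M + 1, dev μ C₀ (X ^ j) = 0) {A : Finset ℝ} (hA : innerProds C₀ = ↑A)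
    (hAM : 2 * A.card ≤ M + 1) {F : Finset (Sph d)} (hFne : F.Nonempty)
    (hF : ∀ φ : Sph d → ℝ, Continuous φ → ∫ x, φ x ∂μ = (∑ x ∈ F, φ x) / (C₀.card : ℝ))
    (hFA : innerProds F ⊆ innerProds C₀) : innerProds C₀ ⊆ innerProds F := by
  classical
  intro t ht
  by_contra htF
  have hfin : (innerProds F).Finite := by
    refine Set.Finite.subset ?_ hFA
    rw [hA]; exact A.finite_toSet
  set A' : Finset ℝ := hfin.toFinset with hA'
  have hcard : A'.card < A.card := by
    refine Finset.card_lt_card (Finset.ssubset_iff_subset_ne.2 ⟨fun s hs => ?_, fun h => htF ?_⟩)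
    · rw [← Finset.mem_coe, ← hA]; exact hFA (by simpa [hA'] using hs)
    · rw [hA, ← h, hA'] at ht
      simpa using ht
  -- `g` is nonnegative on `[-1, 1]` and vanishes exactly at `1` and at the inner products of `F`;
  -- its degree is at most `M` because at least one element of `A` is missing.
  set q : ℝ[X] := ∏ s ∈ A', (X - C s) with hq
  set g : ℝ[X] := (1 - X) * (q * q) with hg
  have hqd : q.natDegree = A'.card := by
    rw [hq, natDegree_prod_of_monic _ _ fun _ _ => monic_X_sub_C _]; simp
  have hgd : g.natDegree ≤ M := by
    refine natDegree_mul_le.trans ?_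
    have h1 : (1 - X : ℝ[X]).natDegree ≤ 1 := by compute_degree
    have h2 : (q * q).natDegree ≤ _ := natDegree_mul_le
    omega
  have hge : ∀ t, g.eval t = (1 - t) * (q.eval t * q.eval t) := fun t => by simp [hg]
  have hL : pairAvg C₀ g = 0 := by
    obtain ⟨x, hx⟩ := hFne
    rw [← integral_zonal (μ := μ) hd hC h0 hgd x, hF _ (by unfold ip; fun_prop),
      Finset.sum_eq_zero, zero_div]
    intro y hy
    rw [hge]
    by_cases hxy : x = y
    · rw [hxy, ip_self]; ring
    · have : q.eval (ip x y) = 0 := by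
        refine prod_X_sub_C_eval_eq ?_
        simp only [hA', Finite.mem_toFinset]
        exact ⟨x, hx, y, hy, hxy, rfl⟩
      rw [this]; ring
  obtain ⟨x, hx, y, hy, hxy, rfl⟩ := ht
  change ip x y ∉ _ at htF
  have hN : (C₀.card : ℝ) ≠ 0 := by simpa using (Finset.card_pos.2 ⟨x, hx⟩).ne'
  rw [← avg_eq_pairAvg hd hC hgd x, div_eq_zero_iff, or_iff_left hN,
    Finset.sum_eq_zero_iff_of_nonneg] at hL
  · have h1 := hL y hy
    rw [hge] at h1
    have hq0 : q.eval (ip x y) ≠ 0 := prod_X_sub_C_eval_ne fun h => htF (by simpa [hA'] using h)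
    have hne : ip x y ≠ 1 := fun h => hxy (ip_eq_one_iff.1 h)
    have : 0 < 1 - ip x y := by
      linarith [lt_of_le_of_ne (ip_mem x y).2 hne]
    exact (mul_pos this (mul_self_pos.2 hq0)).ne' h1
  · intro z _
    rw [hge]
    exact mul_nonneg (by linarith [(ip_mem x z).2]) (mul_self_nonneg _)

/-- A measure with the moments of the tight design `C₀` and no new inner products between points of
its support is supported on a tight design. -/
lemma minimizer_tight (hd : 2 ≤ d) (hM : 1 ≤ M) (hT : IsTightSphDesign d M C₀)
    (h0 : ∀ j < M + 1, dev μ C₀ (X ^ j) = 0)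
    (hS : ∀ x ∈ msupport μ, ∀ y ∈ msupport μ, x ≠ y → ip x y ∈ innerProds C₀) :
    (msupport μ).Finite ∧
      ∃ F : Finset (Sph d), ↑F = msupport μ ∧ IsTightSphDesign d M F := by
  classical
  have hC := hT.1
  have hN : 0 < (C₀.card : ℝ) := by exact_mod_cast hC.1.card_pos
  have hfinA : (innerProds C₀).Finite := by
    refine finite_of_ncard_pos ?_
    rcases hT.2 with ⟨m, hm, hc⟩ | ⟨m, hm, hc, -⟩ <;> omega
  set A : Finset ℝ := hfinA.toFinset
  have hA : innerProds C₀ = ↑A := hfinA.coe_toFinset.symm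
  have hAc : 1 ≤ A.card ∧ 2 * A.card ≤ M + 1 := by
    rcases hT.2 with ⟨m, hm, hc⟩ | ⟨m, hm, hc, -⟩ <;>
    · rw [hA, ncard_coe_finset] at hc; omega
  have hsing := fun x (hx : x ∈ msupport μ) =>
    measure_singleton hd hC h0 hA (by omega) hS hx
  have hFin : ∀ F : Finset (Sph d), ↑F ⊆ msupport μ → μ.real F = F.card / (C₀.card : ℝ) := by
    intro F hF
    rw [← sum_measureReal_singleton, Finset.sum_congr rfl fun x hx => hsing x (hF hx)]
    simp [div_eq_mul_inv]
  have hfin : (msupport μ).Finite := by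
    by_contra hinf
    obtain ⟨F, hF, hc⟩ := Set.Infinite.exists_subset_card_eq hinf (C₀.card + 1)
    have h1 := hFin F hF
    have h2 : μ.real (F : Set (Sph d)) ≤ 1 := measureReal_le_one
    rw [h1, div_le_one hN, hc] at h2
    push_cast at h2
    linarith
  refine ⟨hfin, hfin.toFinset, hfin.coe_toFinset, ?_⟩
  set F := hfin.toFinset with hFdef
  have hFS : (F : Set (Sph d)) = msupport μ := hfin.coe_toFinset
  have hae : ∀ᵐ y ∂μ, y ∈ (F : Set (Sph d)) := by
    rw [hFS]; exact measure_compl_msupport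
  have hcard : (F.card : ℝ) = C₀.card := by
    have h1 := hFin F hFS.le
    have h2 : μ.real (F : Set (Sph d)) = 1 := by
      rw [measureReal_def, prob_compl_eq_zero_iff F.measurableSet |>.1 hae]; simp
    rw [h2] at h1
    rw [eq_div_iff hN.ne'] at h1
    linarith
  have hFne : F.Nonempty := by
    rw [← Finset.card_pos]; exact_mod_cast hcard ▸ hN
  have hintegral : ∀ φ : Sph d → ℝ, Continuous φ → ∫ x, φ x ∂μ = (∑ x ∈ F, φ x) / (C₀.card : ℝ) := by
    intro φ hφ
    rw [← Measure.restrict_eq_self_of_ae_mem hae,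
      setIntegral_finset _ (integrable_of_cont hφ).integrableOn, Finset.sum_div]
    refine Finset.sum_congr rfl fun x hx => ?_
    rw [hsing x (hFS.le hx), smul_eq_mul]; ring
  have hFA : innerProds F = innerProds C₀ := by
    have hsub : innerProds F ⊆ innerProds C₀ := by
      rintro t ⟨x, hx, y, hy, hxy, rfl⟩
      exact hS x (hFS.le hx) y (hFS.le hy) hxy
    exact hsub.antisymm (innerProds_subset hd hC h0 hA hAc.2 hFne hintegral hsub)
  refine ⟨⟨hFne, fun P hP => ?_⟩, by rw [hFA]; exact hT.2⟩
  have hcP : Continuous fun x : Sph d => evalPt P x := by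
    unfold evalPt
    exact (MvPolynomial.continuous_eval P).comp (by fun_prop)
  rw [hcard, ← hintegral _ hcP, integral_evalPt hd hC h0 P hP, hC.2 P hP]
end

open Set in
/-- uniqueness. Let `f : [-1,1] → ℝ` be continuous, `(M+1)`-times
differentiable on `(-1,1)`, absolutely monotonic of degree `M` with `f^{(M+1)} < 0` on
`(-1,1)`. If some tight spherical `M`-design minimizes `I_f` (via its uniform measure)
over Borel probability measures on `S^{d-1}`, then every minimizing Borel probability
measure has finite support, and its support is a tight spherical `M`-design. -/
theorem minimizers_are_tight_designs
    {d M : ℕ} (hd : 2 ≤ d) (hM : 1 ≤ M)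
    (f : ℝ → ℝ) (hfc : ContinuousOn f (Icc (-1) 1))
    (hdiff : ∀ k < M + 1,
      DifferentiableOn ℝ (iteratedDerivWithin k f (Ioo (-1) 1)) (Ioo (-1) 1))
    (habs : ∀ k ≤ M, ∀ s ∈ Ioo (-1 : ℝ) 1, 0 ≤ iteratedDerivWithin k f (Ioo (-1) 1) s)
    (hlast : ∀ s ∈ Ioo (-1 : ℝ) 1, iteratedDerivWithin (M + 1) f (Ioo (-1) 1) s < 0)
    (C₀ : Finset (Sph d)) (hC₀ : IsTightSphDesign d M C₀)
    (hC₀min : ∀ ν : Measure (Sph d), IsProbabilityMeasure ν →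
      energy f (unifOn C₀) ≤ energy f ν)
    (μ : Measure (Sph d)) [IsProbabilityMeasure μ]
    (hμmin : ∀ ν : Measure (Sph d), IsProbabilityMeasure ν → energy f μ ≤ energy f ν) :
    (msupport μ).Finite ∧
      ∃ F : Finset (Sph d), ↑F = msupport μ ∧ IsTightSphDesign d M F := by
  obtain ⟨h0, hS⟩ := minimizer_moments hd hM hfc (derivSeq_of_hyp f hfc hdiff habs hlast) hC₀
    (hμmin _ (isProbabilityMeasure_unifOn hC₀.1.1))
  exact minimizer_tight hd hM hC₀ h0 hS
end
end

section
/- Let 𝓛 : [−1,1] → ℝ be given by 𝓛(t) = max{0, 8t² + 8t}. Let e_1, e_2, e_3 be the standard orthonormal basis of ℝ³ and let ν = (1/6) Σ_{i=1}^{3} (δ_{e_i} + δ_{−e_i}) be the uniform probability measure on the six vertices of the cross-polytope in S². Then ν minimizes the energy I_𝓛(μ) = ∫∫ 𝓛(⟨x,y⟩) dμ(x)dμ(y) over all Borel probability measures μ on S²: for every Borel probability measure μ on S², I_𝓛(μ) ≥ I_𝓛(ν). -/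
/-!
The kernel dominates the quadratic `h(t) = 8t² + 8t`, and the two agree at the inner products
`1, 0, -1` that occur in the cross-polytope, whose energy is therefore `16/6 = 8/3`. It remains to
bound `I_h(μ)` below. Writing `b = ∫ y dμ` and `M = ∫ y yᵀ dμ`, one has
`I_h(μ) = 8 ‖M‖² + 8 ‖b‖²` (Frobenius norm), where `tr M = 1` because `μ` lives on the sphere, and
`‖M‖² ≥ ∑ M_ii² ≥ (tr M)² / 3 = 1/3` by Cauchy-Schwarz. Hence
`I_𝓛(μ) ≥ I_h(μ) ≥ 8/3`.
-/

open MeasureTheory Metric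
open scoped RealInnerProductSpace

noncomputable section

variable {d : ℕ}

/-- The antipode of a point of the sphere. -/
def negPt (x : Sph d) : Sph d :=
  ⟨-(x : EuclideanSpace ℝ (Fin d)), by
    rw [mem_sphere_zero_iff_norm, norm_neg]
    exact mem_sphere_zero_iff_norm.mp x.2⟩

/-- The `i`-th standard basis vector of `ℝ³`, as a point of `S²`. -/
def basisPt (i : Fin 3) : Sph 3 :=
  ⟨EuclideanSpace.single i (1 : ℝ), by
    rw [mem_sphere_zero_iff_norm, EuclideanSpace.norm_single]
    simp⟩

/-- The causal variational kernel `𝓛(t) = max {0, 8t² + 8t}` (the case `τ = √2`). -/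
def causalKernel (t : ℝ) : ℝ := max 0 (8 * t ^ 2 + 8 * t)

/-- The uniform probability measure on the six vertices `±e_i` of the cross-polytope
in `S²`. -/
def crossPolytopeMeasure : Measure (Sph 3) :=
  (6 : ENNReal)⁻¹ • ∑ i : Fin 3, (Measure.dirac (basisPt i) + Measure.dirac (negPt (basisPt i)))

lemma integrable_of_continuous_sph {μ : Measure (Sph 3)} [IsProbabilityMeasure μ]
    {f : Sph 3 → ℝ} (hf : Continuous f) : Integrable f μ :=
  hf.integrable_of_hasCompactSupport (HasCompactSupport.of_compactSpace f)

lemma inner_sph (x y : Sph 3) :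
    ⟪(x : EuclideanSpace ℝ (Fin 3)), (y : EuclideanSpace ℝ (Fin 3))⟫
      = ∑ i, x.1 i * y.1 i := by
  simp [PiLp.inner_apply, mul_comm]

lemma sum_sq_sph (x : Sph 3) : ∑ i, x.1 i * x.1 i = 1 := by
  rw [← inner_sph, real_inner_self_eq_norm_sq, mem_sphere_zero_iff_norm.mp x.2, one_pow]

/-- The energy of the quadratic minorant `8t² + 8t` in terms of first and second moments. -/
lemma energy_quadratic (μ : Measure (Sph 3)) [IsProbabilityMeasure μ] :
    energy (fun t => 8 * t ^ 2 + 8 * t) μ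
      = 8 * ∑ i, ∑ j, (∫ y, y.1 i * y.1 j ∂μ) ^ 2 + 8 * ∑ i, (∫ y, y.1 i ∂μ) ^ 2 := by
  have hexp : ∀ x y : Sph 3,
      8 * ⟪(x : EuclideanSpace ℝ (Fin 3)), (y : EuclideanSpace ℝ (Fin 3))⟫ ^ 2
        + 8 * ⟪(x : EuclideanSpace ℝ (Fin 3)), (y : EuclideanSpace ℝ (Fin 3))⟫
      = 8 * ∑ i, ∑ j, (x.1 i * x.1 j) * (y.1 i * y.1 j) + 8 * ∑ i, x.1 i * y.1 i := by
    intro x y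
    rw [inner_sph]
    simp only [Fin.sum_univ_three]
    ring
  have hlin : ∀ (a : Fin 3 → Fin 3 → ℝ) (c : Fin 3 → ℝ),
      ∫ y : Sph 3, (8 * ∑ i, ∑ j, a i j * (y.1 i * y.1 j) + 8 * ∑ i, c i * y.1 i) ∂μ
      = 8 * ∑ i, ∑ j, a i j * (∫ y, y.1 i * y.1 j ∂μ) + 8 * ∑ i, c i * ∫ y, y.1 i ∂μ := by
    intro a c
    rw [integral_add (integrable_of_continuous_sph (by fun_prop))
      (integrable_of_continuous_sph (by fun_prop)), integral_const_mul, integral_const_mul,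
      integral_finsetSum _ (fun i _ => integrable_of_continuous_sph (by fun_prop)),
      integral_finsetSum _ (fun i _ => integrable_of_continuous_sph (by fun_prop))]
    simp only [integral_const_mul]
    congr 2
    refine Finset.sum_congr rfl fun i _ => ?_
    rw [integral_finsetSum _ (fun j _ => integrable_of_continuous_sph (by fun_prop))]
    simp only [integral_const_mul]
  unfold energy
  simp only [hexp, hlin]
  -- After the inner integration, the moments are the coefficients of a form in `x` of the same shape.
  simp only [mul_comm (_ * _ : ℝ) (integral _ _), mul_comm (_ : ℝ) (integral _ _)]
  rw [hlin]
  simp only [sq]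

lemma quadratic_energy_ge (μ : Measure (Sph 3)) [IsProbabilityMeasure μ] :
    8 / 3 ≤ energy (fun t => 8 * t ^ 2 + 8 * t) μ := by
  rw [energy_quadratic]
  have htr : ∑ i, ∫ y : Sph 3, y.1 i * y.1 i ∂μ = 1 := by
    rw [← integral_finsetSum]
    · simp [sum_sq_sph]
    · exact fun i _ => integrable_of_continuous_sph (by fun_prop)
  have hdiag : ∑ i, (∫ y : Sph 3, y.1 i * y.1 i ∂μ) ^ 2
      ≤ ∑ i, ∑ j, (∫ y : Sph 3, y.1 i * y.1 j ∂μ) ^ 2 :=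
    Finset.sum_le_sum fun i _ =>
      Finset.single_le_sum (f := fun j => (∫ y : Sph 3, y.1 i * y.1 j ∂μ) ^ 2)
        (fun j _ => sq_nonneg _) (Finset.mem_univ i)
  have hcs := sq_sum_le_card_mul_sum_sq (s := Finset.univ)
    (f := fun i => ∫ y : Sph 3, y.1 i * y.1 i ∂μ)
  rw [htr] at hcs
  have hb : 0 ≤ ∑ i, (∫ y : Sph 3, y.1 i ∂μ) ^ 2 := Finset.sum_nonneg fun i _ => sq_nonneg _
  simp only [Finset.card_univ, Fintype.card_fin] at hcs
  push_cast at hcs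
  linarith

lemma quadratic_energy_le_causal (μ : Measure (Sph 3)) [IsProbabilityMeasure μ] :
    energy (fun t => 8 * t ^ 2 + 8 * t) μ ≤ energy causalKernel μ := by
  have key : ∀ f : ℝ → ℝ, Continuous f → Integrable (fun x : Sph 3 =>
      ∫ y : Sph 3, f ⟪(x : EuclideanSpace ℝ (Fin 3)), (y : EuclideanSpace ℝ (Fin 3))⟫ ∂μ) μ := by
    intro f hf
    have hc : Continuous fun p : Sph 3 × Sph 3 =>
        f ⟪(p.1 : EuclideanSpace ℝ (Fin 3)), (p.2 : EuclideanSpace ℝ (Fin 3))⟫ := by fun_prop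
    exact (hc.integrable_of_hasCompactSupport (μ := μ.prod μ)
      (HasCompactSupport.of_compactSpace _)).integral_prod_left
  have hL : Continuous causalKernel := by unfold causalKernel; fun_prop
  refine integral_mono (key (fun t => 8 * t ^ 2 + 8 * t) (by fun_prop)) (key _ hL) fun x => ?_
  refine integral_mono (integrable_of_continuous_sph ?_) (integrable_of_continuous_sph ?_)
    fun y => le_max_right _ _ <;> fun_prop

lemma integral_crossPolytope (f : Sph 3 → ℝ) :
    ∫ x, f x ∂crossPolytopeMeasure = 6⁻¹ * ∑ i, (f (basisPt i) + f (negPt (basisPt i))) := by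
  have hi : ∀ x : Sph 3, Integrable f (Measure.dirac x) := fun x => integrable_dirac (by simp)
  unfold crossPolytopeMeasure
  rw [integral_smul_measure,
    integral_finsetSum_measure (fun i _ => (hi _).add_measure (hi _))]
  simp only [integral_add_measure (hi _) (hi _), integral_dirac]
  simp

lemma energy_crossPolytope : energy causalKernel crossPolytopeMeasure = 8 / 3 := by
  unfold energy
  simp only [integral_crossPolytope, inner_sph, Fin.sum_univ_three, basisPt, negPt, causalKernel]
  simp
  norm_num

/-- causal variational principle, cross-polytope case. The uniform
probability measure `ν` on the vertices of the cross-polytope minimizes the energy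
`I_𝓛(μ) = ∫∫ 𝓛(⟨x,y⟩) dμ dμ`, `𝓛(t) = max {0, 8t² + 8t}`, over all Borel probability
measures on `S²`. -/
theorem cross_polytope_minimizes_causal_energy
    (μ : Measure (Sph 3)) [IsProbabilityMeasure μ] :
    energy causalKernel crossPolytopeMeasure ≤ energy causalKernel μ := by
  rw [energy_crossPolytope]
  exact (quadratic_energy_ge μ).trans (quadratic_energy_le_causal μ)
end
end

section
/- Let d ≥ 2 and let k ≥ 1 be an integer. Then for every Borel probability measure μ on S^{d-1}, ∫∫ ⟨x,y⟩^{2k} dμ(x)dμ(y) ≥ Π_{j=0}^{k−1} (2j+1)/(d+2j) = (2k−1)!!/(d(d+2)⋯(d+2k−2)), with equality when μ = σ, the uniform probability measure on S^{d-1}. In particular, σ minimizes the 2k-frame energy over all Borel probability measures on S^{d-1}. -/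
/-!
Since `⟨x, y⟩ ^ n = ⟨x^{⊗n}, y^{⊗n}⟩`, the mixed energy `∫∫ ⟨x, y⟩ ^ n dμ(x) dν(y)` is the inner
product of the moment tensors `T_μ = ∫ x^{⊗n} dμ` and `T_ν` (`mixed_energy`). For `n = 2k` the
potential `x ↦ ∫ ⟨x, y⟩ ^ (2k) dσ(y)` is constant on the sphere, equal to
`c = ∏_{j<k} (2j+1)/(d+2j)` (`sphere_moment`), so `⟨T_μ, T_σ⟩ = c` for every probability measure
`μ`, and `⟨T_σ, T_σ⟩ = c` in particular. Hence `0 ≤ ‖T_μ - T_σ‖² = ‖T_μ‖² - c`, which is the bound.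

The constant comes from evaluating `∫ ⟨x, v⟩ ^ (2k) e^{-‖v‖²} dv` over `ℝ^d` twice: in polar
coordinates (`polar_integral`) and as a product of one-dimensional integrals in an orthonormal
basis containing `x` (`gaussian_integral`). This gives
`c = Γ(k + 1/2) Γ(d/2) / (Γ(1/2) Γ(k + d/2))`, which is the product above (`gamma_ratio`).
-/

open MeasureTheory Metric
open scoped RealInnerProductSpace

noncomputable section

variable {d : ℕ}

theorem radial_integral (n : ℕ) :
    ∫ r in Set.Ioi (0 : ℝ), r ^ n * Real.exp (-r ^ 2) = Real.Gamma (((n : ℝ) + 1) / 2) / 2 := by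
  have h := integral_rpow_mul_exp_neg_rpow (p := 2) (q := n) two_pos
    (by have := n.cast_nonneg (α := ℝ); linarith)
  simp only [Real.rpow_natCast, Real.rpow_ofNat] at h
  rw [h]
  ring

theorem line_integral (k : ℕ) :
    ∫ t : ℝ, t ^ (2 * k) * Real.exp (-t ^ 2) = Real.Gamma ((k : ℝ) + 1 / 2) := by
  have h := integral_comp_abs (f := fun t : ℝ => t ^ (2 * k) * Real.exp (-t ^ 2))
  have e : ∀ t : ℝ, |t| ^ (2 * k) * Real.exp (-|t| ^ 2) = t ^ (2 * k) * Real.exp (-t ^ 2) := by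
    intro t
    rw [sq_abs, pow_mul, sq_abs, ← pow_mul]
  simp only [e] at h
  rw [h, radial_integral]
  push_cast
  rw [show (2 * (k : ℝ) + 1) / 2 = k + 1 / 2 by ring]
  ring

/-- Polar coordinates separate the Gaussian moment in direction `x` into a spherical moment
and the radial factor `∫₀^∞ r^{2k+d-1} e^{-r²} dr = Γ(k + d/2) / 2`. -/
theorem polar_integral (hd : 2 ≤ d) (k : ℕ) (x : EuclideanSpace ℝ (Fin d)) :
    ∫ v : EuclideanSpace ℝ (Fin d), ⟪x, v⟫ ^ (2 * k) * Real.exp (-‖v‖ ^ 2) =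
      (∫ y : Sph d, ⟪x, (y : EuclideanSpace ℝ (Fin d))⟫ ^ (2 * k)
        ∂(volume : Measure (EuclideanSpace ℝ (Fin d))).toSphere) *
      (Real.Gamma ((k : ℝ) + d / 2) / 2) := by
  have : Nontrivial (EuclideanSpace ℝ (Fin d)) := by
    have : Nonempty (Fin d) := ⟨⟨0, by omega⟩⟩
    infer_instance
  set μ : Measure (EuclideanSpace ℝ (Fin d)) := volume
  have hdim : Module.finrank ℝ (EuclideanSpace ℝ (Fin d)) = d := by simp
  calc
    _ = ∫ v : ({(0)}ᶜ : Set (EuclideanSpace ℝ (Fin d))),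
          ⟪x, v.1⟫ ^ (2 * k) * Real.exp (-‖v.1‖ ^ 2) ∂(μ.comap (↑)) := by
      rw [integral_subtype_comap (measurableSet_singleton _).compl
        fun v : EuclideanSpace ℝ (Fin d) ↦ ⟪x, v⟫ ^ (2 * k) * Real.exp (-‖v‖ ^ 2),
        restrict_compl_singleton]
    _ = ∫ p : Sph d × Set.Ioi (0 : ℝ),
          ⟪x, (p.1 : EuclideanSpace ℝ (Fin d))⟫ ^ (2 * k) *
            ((p.2 : ℝ) ^ (2 * k) * Real.exp (-(p.2 : ℝ) ^ 2))
          ∂μ.toSphere.prod (.volumeIoiPow (Module.finrank ℝ (EuclideanSpace ℝ (Fin d)) - 1)) := by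
      rw [← μ.measurePreserving_homeomorphUnitSphereProd.integral_comp
        (Homeomorph.measurableEmbedding _)]
      refine integral_congr_ae (.of_forall fun v => ?_)
      have hv : ‖(v : EuclideanSpace ℝ (Fin d))‖ ≠ 0 := norm_ne_zero_iff.2 v.2
      simp only [homeomorphUnitSphereProd_apply_fst_coe, homeomorphUnitSphereProd_apply_snd_coe,
        inner_smul_right]
      rw [mul_pow, inv_pow]
      field_simp
    _ = (∫ y : Sph d, ⟪x, (y : EuclideanSpace ℝ (Fin d))⟫ ^ (2 * k) ∂μ.toSphere) *
          ∫ r : Set.Ioi (0 : ℝ), (r : ℝ) ^ (2 * k) * Real.exp (-(r : ℝ) ^ 2)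
            ∂.volumeIoiPow (Module.finrank ℝ (EuclideanSpace ℝ (Fin d)) - 1) :=
      integral_prod_mul (fun y : Sph d => ⟪x, (y : EuclideanSpace ℝ (Fin d))⟫ ^ (2 * k))
        (fun r : Set.Ioi (0 : ℝ) => (r : ℝ) ^ (2 * k) * Real.exp (-(r : ℝ) ^ 2))
    _ = _ := by
      congr 1
      simp only [Measure.volumeIoiPow, ENNReal.ofReal]
      rw [integral_withDensity_eq_integral_smul
          ((measurable_subtype_coe.pow_const _).real_toNNReal),
        integral_subtype_comap measurableSet_Ioi fun r : ℝ ↦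
          Real.toNNReal (r ^ (Module.finrank ℝ (EuclideanSpace ℝ (Fin d)) - 1)) •
            (r ^ (2 * k) * Real.exp (-r ^ 2)), hdim]
      have : ∀ r ∈ Set.Ioi (0 : ℝ), Real.toNNReal (r ^ (d - 1)) •
            (r ^ (2 * k) * Real.exp (-r ^ 2)) = r ^ (d - 1 + 2 * k) * Real.exp (-r ^ 2) := by
        intro r hr
        rw [NNReal.smul_def, Real.coe_toNNReal _ (pow_nonneg hr.out.le _), smul_eq_mul, pow_add,
          mul_assoc]
      rw [setIntegral_congr_fun measurableSet_Ioi this, radial_integral]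
      push_cast [Nat.cast_sub (show 1 ≤ d by omega)]
      congr 2
      ring

/-- In an orthonormal basis having the unit vector `x` among its members, the Gaussian moment
in direction `x` factors into one-dimensional integrals, so it does not depend on `x`. -/
theorem gaussian_integral (hd : 2 ≤ d) (k : ℕ) (x : Sph d) :
    ∫ v : EuclideanSpace ℝ (Fin d), ⟪(x : EuclideanSpace ℝ (Fin d)), v⟫ ^ (2 * k)
        * Real.exp (-‖v‖ ^ 2) =
      Real.Gamma ((k : ℝ) + 1 / 2) * Real.Gamma (1 / 2) ^ (d - 1) := by
  let i₀ : Fin d := ⟨0, by omega⟩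
  obtain ⟨b, hb⟩ : ∃ b : OrthonormalBasis (Fin d) ℝ (EuclideanSpace ℝ (Fin d)),
      ∀ i ∈ ({i₀} : Set (Fin d)), b i = x := by
    refine Orthonormal.exists_orthonormalBasis_extension_of_card_eq (by simp)
      (v := fun _ => (x : EuclideanSpace ℝ (Fin d))) ?_
    refine ⟨fun _ => by simp, fun i j hij => (hij (Subsingleton.elim i j)).elim⟩
  have hb := hb i₀ rfl
  have hmp := b.measurePreserving_repr_symm.comp (PiLp.volume_preserving_toLp (Fin d))
  rw [← hmp.integral_comp (b.measurableEquiv.symm.measurableEmbedding.comp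
    (MeasurableEquiv.toLp 2 _).measurableEmbedding)]
  have e : ∀ w : Fin d → ℝ,
      ⟪(x : EuclideanSpace ℝ (Fin d)), (b.repr.symm ∘ WithLp.toLp 2) w⟫ ^ (2 * k)
        * Real.exp (-‖(b.repr.symm ∘ WithLp.toLp 2) w‖ ^ 2)
      = ∏ i, ((w i) ^ (2 * (if i = i₀ then k else 0)) * Real.exp (-(w i) ^ 2)) := by
    intro w
    rw [Finset.prod_mul_distrib, ← Real.exp_sum, ← hb, ← b.repr_apply_apply]
    simp [EuclideanSpace.norm_sq_eq]
  simp only [e]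
  rw [integral_fintype_prod_volume_eq_prod (𝕜 := ℝ)
    (fun i t => t ^ (2 * (if i = i₀ then k else 0)) * Real.exp (-t ^ 2))]
  simp only [line_integral]
  rw [← Finset.mul_prod_erase _ _ (Finset.mem_univ i₀), if_pos rfl,
    Finset.prod_congr rfl (g := fun _ => Real.Gamma (1 / 2))]
  · simp
  · intro i hi
    simp [Finset.ne_of_mem_erase hi]

theorem gamma_ratio (hd : 2 ≤ d) (k : ℕ) :
    Real.Gamma ((k : ℝ) + 1 / 2) * Real.Gamma ((d : ℝ) / 2) =
      (∏ j ∈ Finset.range k, (2 * (j : ℝ) + 1) / ((d : ℝ) + 2 * j)) *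
        (Real.Gamma (1 / 2) * Real.Gamma ((k : ℝ) + d / 2)) := by
  have hd' : (0 : ℝ) < d := by exact_mod_cast (by omega : 0 < d)
  induction k with
  | zero => simp
  | succ k ih =>
    rw [Finset.prod_range_succ]
    push_cast
    rw [show (k : ℝ) + 1 + 1 / 2 = (k + 1 / 2) + 1 by ring,
      show (k : ℝ) + 1 + d / 2 = (k + d / 2) + 1 by ring,
      Real.Gamma_add_one (by positivity), Real.Gamma_add_one (by positivity), mul_assoc, ih]
    field_simp
    ring

theorem isProbabilityMeasure_sphσ (hd : 2 ≤ d) : IsProbabilityMeasure (sphσ d) := by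
  have : Nontrivial (EuclideanSpace ℝ (Fin d)) := by
    have : Nonempty (Fin d) := ⟨⟨0, by omega⟩⟩
    infer_instance
  have : NeZero (volume : Measure (EuclideanSpace ℝ (Fin d))).toSphere :=
    ⟨Measure.toSphere_ne_zero _⟩
  unfold sphσ
  infer_instance

/-- The potential of `σ` is constant on the sphere. Its value is obtained by comparing the
Gaussian moments of orders `2k` and `0`; the latter gives the total mass of the surface measure. -/
theorem sphere_moment (hd : 2 ≤ d) (k : ℕ) (x : Sph d) :
    ∫ y : Sph d, ⟪(x : EuclideanSpace ℝ (Fin d)), (y : EuclideanSpace ℝ (Fin d))⟫ ^ (2 * k)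
        ∂(sphσ d) = ∏ j ∈ Finset.range k, (2 * (j : ℝ) + 1) / ((d : ℝ) + 2 * j) := by
  have hd' : (0 : ℝ) < d := by exact_mod_cast (by omega : 0 < d)
  have h := (polar_integral hd k (x : EuclideanSpace ℝ (Fin d))).symm.trans
    (gaussian_integral hd k x)
  have h0 := (polar_integral hd 0 (x : EuclideanSpace ℝ (Fin d))).symm.trans
    (gaussian_integral hd 0 x)
  simp only [mul_zero, pow_zero, integral_const, Nat.cast_zero, zero_add, smul_eq_mul,
    mul_one] at h0
  have hr := gamma_ratio hd k
  have g1 : 0 < Real.Gamma ((k : ℝ) + d / 2) := Real.Gamma_pos_of_pos (by positivity)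
  have g2 : 0 < Real.Gamma ((d : ℝ) / 2) := Real.Gamma_pos_of_pos (by positivity)
  have g3 : 0 < Real.Gamma (1 / 2 : ℝ) := Real.Gamma_pos_of_pos (by positivity)
  rw [sphσ, integral_smul_measure, ENNReal.toReal_inv, smul_eq_mul]
  change (Measure.real _ Set.univ)⁻¹ * _ = _
  set V := Measure.real (volume : Measure (EuclideanSpace ℝ (Fin d))).toSphere Set.univ
  set S := ∫ y : Sph d, ⟪(x : EuclideanSpace ℝ (Fin d)), (y : EuclideanSpace ℝ (Fin d))⟫ ^ (2 * k)
        ∂(volume : Measure (EuclideanSpace ℝ (Fin d))).toSphere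
  set P := ∏ j ∈ Finset.range k, (2 * (j : ℝ) + 1) / ((d : ℝ) + 2 * j)
  have hV : V ≠ 0 := by
    intro hV
    rw [hV, zero_mul] at h0
    exact (mul_pos g3 (pow_pos g3 _)).ne h0
  rw [inv_mul_eq_iff_eq_mul₀ hV]
  have key : (S - V * P) * (Real.Gamma ((k : ℝ) + d / 2) * Real.Gamma ((d : ℝ) / 2)) = 0 := by
    linear_combination 2 * Real.Gamma ((d : ℝ) / 2) * h
      - 2 * P * Real.Gamma ((k : ℝ) + d / 2) * h0 + 2 * Real.Gamma (1 / 2) ^ (d - 1) * hr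
  have := (mul_eq_zero.1 key).resolve_right (mul_pos g1 g2).ne'
  linarith

/-- The entry with index `p` of the moment tensor `∫ x^{⊗n} dμ(x)`. -/
def tensorMoment (μ : Measure (Sph d)) {n : ℕ} (p : Fin n → Fin d) : ℝ :=
  ∫ x : Sph d, ∏ i, (x : EuclideanSpace ℝ (Fin d)) (p i) ∂μ

theorem integrable_of_continuous (μ : Measure (Sph d)) [IsFiniteMeasure μ] {f : Sph d → ℝ}
    (hf : Continuous f) : Integrable f μ :=
  hf.integrable_of_hasCompactSupport (HasCompactSupport.of_compactSpace f)

/-- The mixed energy is the inner product of the moment tensors, since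
`⟨x, y⟩ ^ n = ⟨x^{⊗n}, y^{⊗n}⟩`. -/
theorem mixed_energy (μ ν : Measure (Sph d)) [IsFiniteMeasure μ] [IsFiniteMeasure ν] (n : ℕ) :
    ∫ x : Sph d, ∫ y : Sph d,
      ⟪(x : EuclideanSpace ℝ (Fin d)), (y : EuclideanSpace ℝ (Fin d))⟫ ^ n ∂ν ∂μ =
      ∑ p : Fin n → Fin d, tensorMoment μ p * tensorMoment ν p := by
  have e : ∀ x y : Sph d,
      ⟪(x : EuclideanSpace ℝ (Fin d)), (y : EuclideanSpace ℝ (Fin d))⟫ ^ n =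
        ∑ p : Fin n → Fin d, (∏ i, (x : EuclideanSpace ℝ (Fin d)) (p i)) *
          ∏ i, (y : EuclideanSpace ℝ (Fin d)) (p i) := by
    intro x y
    rw [PiLp.inner_apply, Finset.sum_pow', Fintype.piFinset_univ]
    refine Finset.sum_congr rfl fun p _ => ?_
    rw [← Finset.prod_mul_distrib]
    simp [mul_comm]
  have hc : ∀ p : Fin n → Fin d,
      Continuous fun x : Sph d => ∏ i, (x : EuclideanSpace ℝ (Fin d)) (p i) := fun p => by
    fun_prop
  simp only [e]
  have inner_eq : ∀ x : Sph d, ∫ y : Sph d, ∑ p : Fin n → Fin d,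
      (∏ i, (x : EuclideanSpace ℝ (Fin d)) (p i)) *
          ∏ i, (y : EuclideanSpace ℝ (Fin d)) (p i) ∂ν =
      ∑ p : Fin n → Fin d, (∏ i, (x : EuclideanSpace ℝ (Fin d)) (p i)) * tensorMoment ν p := by
    intro x
    rw [integral_finsetSum _ fun p _ => (integrable_of_continuous ν (hc p)).const_mul _]
    simp only [integral_const_mul, tensorMoment]
  simp only [inner_eq]
  rw [integral_finsetSum _ fun p _ => (integrable_of_continuous μ (hc p)).mul_const _]
  simp only [integral_mul_const, tensorMoment]

/-- For every Borel probability measure `μ` on `S^{d-1}` one has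
`∫∫ ⟨x,y⟩^{2k} dμ dμ ≥ ∏_{j=0}^{k-1} (2j+1)/(d+2j)`, with equality for the uniform
measure `σ`; in particular `σ` minimizes the `2k`-frame energy. -/
theorem uniform_minimizes_even_frame_energy_real
    {d k : ℕ} (hd : 2 ≤ d) (hk : 1 ≤ k) :
    (∀ μ : Measure (Sph d), IsProbabilityMeasure μ →
      (∏ j ∈ Finset.range k, (2 * (j : ℝ) + 1) / ((d : ℝ) + 2 * j))
        ≤ energy (fun s => s ^ (2 * k)) μ) ∧
    energy (fun s => s ^ (2 * k)) (sphσ d)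
      = ∏ j ∈ Finset.range k, (2 * (j : ℝ) + 1) / ((d : ℝ) + 2 * j) := by
  have := isProbabilityMeasure_sphσ hd
  have mixed : ∀ μ : Measure (Sph d), IsProbabilityMeasure μ →
      ∑ p : Fin (2 * k) → Fin d, tensorMoment μ p * tensorMoment (sphσ d) p =
        ∏ j ∈ Finset.range k, (2 * (j : ℝ) + 1) / ((d : ℝ) + 2 * j) := by
    intro μ _
    rw [← mixed_energy]
    simp [sphere_moment hd]
  refine ⟨fun μ _ => ?_, ?_⟩
  · have h1 := mixed μ inferInstance
    have h2 := mixed (sphσ d) inferInstance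
    have h3 : energy (fun s => s ^ (2 * k)) μ =
        ∑ p : Fin (2 * k) → Fin d, tensorMoment μ p * tensorMoment μ p := mixed_energy μ μ (2 * k)
    have h4 : 0 ≤ ∑ p : Fin (2 * k) → Fin d, (tensorMoment μ p - tensorMoment (sphσ d) p) ^ 2 :=
      Finset.sum_nonneg fun p _ => sq_nonneg _
    have h5 : ∑ p : Fin (2 * k) → Fin d, (tensorMoment μ p - tensorMoment (sphσ d) p) ^ 2 =
        ∑ p : Fin (2 * k) → Fin d, tensorMoment μ p * tensorMoment μ p
        - 2 * ∑ p : Fin (2 * k) → Fin d, tensorMoment μ p * tensorMoment (sphσ d) p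
        + ∑ p : Fin (2 * k) → Fin d, tensorMoment (sphσ d) p * tensorMoment (sphσ d) p := by
      rw [Finset.mul_sum, ← Finset.sum_sub_distrib, ← Finset.sum_add_distrib]
      exact Finset.sum_congr rfl fun p _ => by ring
    linarith
  · simp [energy, sphere_moment hd]
end
end
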